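/- arXiv:1202.2287 — 3 statements merged into one kernel-verified Lean document; each statement's English description precedes it below -/
import Mathlib

section
/- Let Y be an ωQRB-domain. Then the probabilistic powerdomain V_1(Y), i.e. the set of continuous probability valuations on Y ordered pointwise and equipped with its Scott topology, is again an ωQRB-domain. -/
/-!
Fix an increasing sequence of quasi-deflations `ψ n` generating `Y`. Let `E n` be a finite set,
containing the least element, from which all the values of `ψ n` are generated. For an open set
`V`, put `O n V = {x | ψ n x ⊆ V}`. This is open and increases with `n` and `V`; moreover
`V = ⋃ n, O n V`, because a decreasing sequence of finitary compacts whose intersection lies in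
`V` is eventually contained in `V` (`exists_subset_of_iInter_subset`, a consequence of König's
lemma).

For a probability valuation `ν` and `A ⊆ E n`, compare the supermodular function
`A ↦ ν {x | ψ n x ∩ E n ⊆ A}` with the submodular function `A ↦ ν†(↑A)`. The former is below the
latter, so some additive function lies in between (`exists_modular_between`), that is, a system of
point masses on `E n`. Rounding the masses down and giving the deficit to the least element yields
a probability valuation `ξ ≤ ν` in a finite set `D n` of simple valuations, such that
`ν (O n V) ≤ ξ V + 1 / (n + 1)` for all `V` (`exists_mem_gridVals`).

Let `R n ν` be the set of all `ξ ∈ D n` satisfying these last inequalities. The map `ν ↦ ↑(R n ν)`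
is a quasi-deflation: `R n ν` is finite and antitone in `ν`, it is determined by finitely many
strict inequalities `ν (O n V) > ξ V + 1 / (n + 1)`, which are Scott-open conditions on `ν`, and
`ν ∈ ↑(R n ν)` by the previous paragraph. These maps need not form a directed family, but their
squares `ν ↦ ↑⋃ ξ ∈ R n ν, R n ξ` do: by finiteness of `D j`, for every large enough `k` the
`k`-th square evaluated at a point `e` of `D j` is contained in `↑(R j e)`. Since every `ν` is
above some `e ∈ R j ν`, the `k`-th square at `ν` is then contained in the `j`-th square at `ν`
(`exists_generatingFamily`). The intersection of all the squares at `ν` is `↑ν`, as the tolerances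
tend to `0` and `ν V` is the supremum of the `ν (O n (O n V))`.
-/

open Set TopologicalSpace

universe u v

section ScottTopology

variable {α : Type u}

/-- A Scott-open subset of a preorder: an upward-closed set that is inaccessible by
directed suprema. -/
def ScottOpen [Preorder α] (U : Set α) : Prop :=
  IsUpperSet U ∧ ∀ d : Set α, d.Nonempty → DirectedOn (· ≤ ·) d →
    ∀ a : α, IsLUB d a → a ∈ U → (d ∩ U).Nonempty

/-- The Scott topology on a preorder. -/
def scottTop (α : Type u) [Preorder α] : TopologicalSpace α where
  IsOpen := ScottOpen
  isOpen_univ := by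
    refine ⟨isUpperSet_univ, ?_⟩
    intro d hd _ a _ _
    obtain ⟨x, hx⟩ := hd
    exact ⟨x, hx, trivial⟩
  isOpen_inter := by
    rintro U V ⟨hU, hU'⟩ ⟨hV, hV'⟩
    refine ⟨hU.inter hV, ?_⟩
    intro d hd hdir a ha hmem
    obtain ⟨x, hxd, hxU⟩ := hU' d hd hdir a ha hmem.1
    obtain ⟨y, hyd, hyV⟩ := hV' d hd hdir a ha hmem.2
    obtain ⟨z, hzd, hxz, hyz⟩ := hdir x hxd y hyd
    exact ⟨z, hzd, hU hxz hxU, hV hyz hyV⟩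
  isOpen_sUnion := by
    intro S hS
    constructor
    · intro a b hab ha
      obtain ⟨U, hUS, haU⟩ := ha
      exact ⟨U, hUS, (hS U hUS).1 hab haU⟩
    · intro d hd hdir a ha hmem
      obtain ⟨U, hUS, haU⟩ := hmem
      obtain ⟨x, hxd, hxU⟩ := (hS U hUS).2 d hd hdir a ha haU
      exact ⟨x, hxd, U, hUS, hxU⟩

/-- A dcpo: every nonempty directed subset has a least upper bound. -/
def IsDcpo (α : Type u) [Preorder α] : Prop :=
  ∀ d : Set α, d.Nonempty → DirectedOn (· ≤ ·) d → ∃ a : α, IsLUB d a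

/-- The upward closure `↑E = {x | ∃ e ∈ E, e ≤ x}` of a set. -/
def upClos [Preorder α] (E : Set α) : Set α := {x | ∃ e ∈ E, e ≤ x}

/-- A finitary compact: a set of the form `↑E` with `E` finite and nonempty. -/
def IsFinitaryCompact [Preorder α] (A : Set α) : Prop :=
  ∃ E : Set α, E.Finite ∧ E.Nonempty ∧ A = upClos E

/-- `Fin(α)`: the nonempty finitary compacts of `α`, ordered by reverse inclusion. -/
def FinCompacts (α : Type u) [Preorder α] : Type u := {A : Set α // IsFinitaryCompact A}

instance FinCompacts.instPartialOrder [Preorder α] : PartialOrder (FinCompacts α) where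
  le A B := B.1 ⊆ A.1
  le_refl A := subset_rfl
  le_trans A B C h1 h2 := subset_trans h2 h1
  le_antisymm A B h1 h2 := Subtype.ext (subset_antisymm h2 h1)

/-- `U ⋘ x`: every directed family whose least upper bound is above `x` has some
member in `U`. -/
def approxes [Preorder α] (U : Set α) (x : α) : Prop :=
  ∀ d : Set α, d.Nonempty → DirectedOn (· ≤ ·) d →
    ∀ a : α, IsLUB d a → x ≤ a → ∃ z ∈ d, z ∈ U

/-- A quasi-deflation: a map `φ : α → Fin_σ(α)`, continuous for the Scott topologies,
such that `x ∈ φ x` for every `x`, and with finite image. -/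
def IsQuasiDeflation [Preorder α] (φ : α → FinCompacts α) : Prop :=
  @Continuous α (FinCompacts α) (scottTop α) (scottTop (FinCompacts α)) φ ∧
  (∀ x : α, x ∈ (φ x).1) ∧ (Set.range φ).Finite

/-- A generating family of quasi-deflations: a (nonempty) family of quasi-deflations,
directed in the pointwise reverse-inclusion order, with `⋂ i, φ i x = ↑x` for all `x`. -/
def IsGeneratingFamily [Preorder α] {I : Type v} (φ : I → α → FinCompacts α) : Prop :=
  Nonempty I ∧
  (∀ i j : I, ∃ k : I, (∀ x, (φ k x).1 ⊆ (φ i x).1) ∧ (∀ x, (φ k x).1 ⊆ (φ j x).1)) ∧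
  (∀ i, IsQuasiDeflation (φ i)) ∧
  (∀ x : α, (⋂ i, (φ i x).1) = Set.Ici x)

/-- A QRB-domain: a pointed dcpo with a generating family of quasi-deflations. -/
def IsQRBDomain (α : Type u) [PartialOrder α] : Prop :=
  IsDcpo α ∧ (∃ b : α, ∀ x, b ≤ x) ∧
  ∃ (I : Type u) (φ : I → α → FinCompacts α), IsGeneratingFamily φ

/-- An ωQRB-domain: a pointed dcpo with a countable generating family of
quasi-deflations. -/
def IsOmegaQRBDomain (α : Type u) [PartialOrder α] : Prop :=
  IsDcpo α ∧ (∃ b : α, ∀ x, b ≤ x) ∧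
  ∃ (I : Type u), Countable I ∧
    ∃ φ : I → α → FinCompacts α, IsGeneratingFamily φ

/-- A deflation on a pointed dcpo: a Scott-continuous map below the identity, with
finite image. -/
def IsDeflation [Preorder α] (f : α → α) : Prop :=
  @Continuous α α (scottTop α) (scottTop α) f ∧ (∀ x, f x ≤ x) ∧ (Set.range f).Finite

/-- An RB-domain: a pointed dcpo with a directed family of deflations whose pointwise
least upper bound is the identity. -/
def IsRBDomain (α : Type u) [PartialOrder α] : Prop :=
  IsDcpo α ∧ (∃ b : α, ∀ x, b ≤ x) ∧
  ∃ (I : Type u) (f : I → α → α), Nonempty I ∧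
    (∀ i j : I, ∃ k : I, (∀ x, f i x ≤ f k x) ∧ (∀ x, f j x ≤ f k x)) ∧
    (∀ i, IsDeflation (f i)) ∧
    ∀ x : α, IsLUB (Set.range fun i => f i x) x

/-- An ωB-domain (SFP-domain): a pointed dcpo with a non-decreasing sequence of
idempotent deflations whose pointwise least upper bound is the identity. -/
def IsOmegaBDomain (α : Type u) [PartialOrder α] : Prop :=
  IsDcpo α ∧ (∃ b : α, ∀ x, b ≤ x) ∧
  ∃ f : ℕ → α → α,
    (∀ i, IsDeflation (f i)) ∧
    (∀ i, ∀ x, f i (f i x) = f i x) ∧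
    (∀ i j : ℕ, i ≤ j → ∀ x, f i x ≤ f j x) ∧
    ∀ x : α, IsLUB (Set.range fun i => f i x) x

/-- A map finitely separated from the identity. -/
def IsFinitelySeparated [Preorder α] (f : α → α) : Prop :=
  ∃ M : Set α, M.Finite ∧ ∀ x : α, ∃ m ∈ M, f x ≤ m ∧ m ≤ x

/-- An FS-domain: a pointed dcpo with a directed family of continuous maps, each
finitely separated from the identity, whose pointwise least upper bound is the
identity. -/
def IsFSDomain (α : Type u) [PartialOrder α] : Prop :=
  IsDcpo α ∧ (∃ b : α, ∀ x, b ≤ x) ∧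
  ∃ (I : Type u) (f : I → α → α), Nonempty I ∧
    (∀ i j : I, ∃ k : I, (∀ x, f i x ≤ f k x) ∧ (∀ x, f j x ≤ f k x)) ∧
    (∀ i, @Continuous α α (scottTop α) (scottTop α) (f i) ∧ IsFinitelySeparated (f i)) ∧
    ∀ x : α, IsLUB (Set.range fun i => f i x) x

/-- A controlled QRB-domain: a pointed dcpo with a directed family of controlled
quasi-deflations `(f i, φ i)` (i.e. `φ i x ⊆ ↑(f i x)`) with `x = sup_i f i x`. -/
def IsControlledQRBDomain (α : Type u) [PartialOrder α] : Prop :=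
  IsDcpo α ∧ (∃ b : α, ∀ x, b ≤ x) ∧
  ∃ (I : Type u) (f : I → α → α) (φ : I → α → FinCompacts α), Nonempty I ∧
    (∀ i j : I, ∃ k : I,
      ((∀ x, f i x ≤ f k x) ∧ ∀ x, (φ k x).1 ⊆ (φ i x).1) ∧
      ((∀ x, f j x ≤ f k x) ∧ ∀ x, (φ k x).1 ⊆ (φ j x).1)) ∧
    (∀ i, @Continuous α α (scottTop α) (scottTop α) (f i) ∧ IsQuasiDeflation (φ i) ∧
      ∀ x, (φ i x).1 ⊆ Set.Ici (f i x)) ∧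
    ∀ x : α, IsLUB (Set.range fun i => f i x) x

/-- A continuous dcpo: for every `x`, the set of elements way-below `x` is
(nonempty and) directed and has `x` as least upper bound. -/
def IsContinuousDcpo (α : Type u) [Preorder α] : Prop :=
  IsDcpo α ∧ ∀ x : α,
    {y : α | approxes (Set.Ici y) x}.Nonempty ∧
    DirectedOn (· ≤ ·) {y : α | approxes (Set.Ici y) x} ∧
    IsLUB {y : α | approxes (Set.Ici y) x} x

/-- The finitary compacts `↑E` (E finite nonempty) that approximate `x`. -/
def finUpsBelow [Preorder α] (x : α) : Set (Set α) :=
  {A | (∃ E : Set α, E.Finite ∧ E.Nonempty ∧ A = upClos E) ∧ approxes A x}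

/-- A quasi-continuous dcpo. -/
def IsQuasiContinuous (α : Type u) [Preorder α] : Prop :=
  IsDcpo α ∧ ∀ x : α,
    (finUpsBelow x).Nonempty ∧
    DirectedOn (fun A B : Set α => B ⊆ A) (finUpsBelow x) ∧
    ⋂₀ finUpsBelow x = Set.Ici x

/-- The upper Vietoris topology on `Fin(α)` (the subspace topology induced from the
Smyth powerspace of `α` with its Scott topology), generated by the sets
`◻U = {↑E | ↑E ⊆ U}` for `U` Scott-open. -/
def finUpperVietoris (α : Type u) [Preorder α] : TopologicalSpace (FinCompacts α) :=
  TopologicalSpace.generateFrom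
    {S | ∃ U : Set α, ScottOpen U ∧ S = {A : FinCompacts α | A.1 ⊆ U}}

end ScottTopology

section Spaces

variable {X : Type u} {Y : Type v}

/-- The specialization preorder of a topological space: `x ≤ y` iff every open set
containing `x` contains `y`. -/
def specLE [TopologicalSpace X] (x y : X) : Prop :=
  ∀ U : Set X, IsOpen U → x ∈ U → y ∈ U

/-- `↑x` in the specialization preorder. -/
def specUp [TopologicalSpace X] (x : X) : Set X := {y | specLE x y}

/-- Upward closure of a set in the specialization preorder. -/
def specUpSet [TopologicalSpace X] (A : Set X) : Set X := {y | ∃ a ∈ A, specLE a y}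

/-- Downward closure of a set in the specialization preorder. -/
def specDownSet [TopologicalSpace X] (A : Set X) : Set X := {x | ∃ a ∈ A, specLE x a}

/-- A saturated set: one that is upward closed in the specialization preorder. -/
def IsSaturatedSet [TopologicalSpace X] (A : Set X) : Prop :=
  ∀ x ∈ A, ∀ y : X, specLE x y → y ∈ A

/-- A coherent space: the intersection of any two compact saturated subsets is
compact. -/
def IsCoherent (X : Type u) [TopologicalSpace X] : Prop :=
  ∀ Q₁ Q₂ : Set X, IsCompact Q₁ → IsSaturatedSet Q₁ → IsCompact Q₂ → IsSaturatedSet Q₂ →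
    IsCompact (Q₁ ∩ Q₂)

/-- A stably compact space: T0, compact, locally compact, sober and coherent. -/
def IsStablyCompact (X : Type u) [TopologicalSpace X] : Prop :=
  T0Space X ∧ CompactSpace X ∧ LocallyCompactSpace X ∧ QuasiSober X ∧ IsCoherent X

/-- A proper map: continuous, the downward closure of the image of any closed set is
closed, and the preimage of `↑y` is compact for every `y`. -/
def PaperProper [TopologicalSpace X] [TopologicalSpace Y] (r : X → Y) : Prop :=
  Continuous r ∧
  (∀ F : Set X, IsClosed F → IsClosed (specDownSet (r '' F))) ∧
  ∀ y : Y, IsCompact (r ⁻¹' specUp y)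

/-- The Smyth powerspace: nonempty compact saturated subsets. -/
def SmythP (X : Type u) [TopologicalSpace X] : Type u :=
  {Q : Set X // Q.Nonempty ∧ IsCompact Q ∧ IsSaturatedSet Q}

/-- The upper Vietoris topology on the Smyth powerspace, generated by the sets
`◻U = {Q | Q ⊆ U}`, `U` open. -/
instance SmythP.instTopologicalSpace [TopologicalSpace X] : TopologicalSpace (SmythP X) :=
  TopologicalSpace.generateFrom
    {S | ∃ U : Set X, IsOpen U ∧ S = {Q : SmythP X | Q.1 ⊆ U}}

/-- The order on the Smyth powerspace: reverse inclusion. -/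
instance SmythP.instPartialOrder [TopologicalSpace X] : PartialOrder (SmythP X) where
  le Q Q' := Q'.1 ⊆ Q.1
  le_refl Q := subset_rfl
  le_trans Q Q' Q'' h1 h2 := subset_trans h2 h1
  le_antisymm Q Q' h1 h2 := Subtype.ext (subset_antisymm h2 h1)

/-- A quasi-retraction `r : X → Y`: a continuous map admitting a continuous
quasi-section `ς : Y → S_V(X)` with `↑{r x | x ∈ ς y} = ↑y` for every `y`. -/
def IsQuasiRetraction [TopologicalSpace X] [TopologicalSpace Y] (r : X → Y) : Prop :=
  Continuous r ∧
  ∃ ς : Y → SmythP X, Continuous ς ∧ ∀ y : Y, specUpSet (r '' (ς y).1) = specUp y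

/-- The specialization ordering of a T0 space, as a partial order. -/
def specOrder (X : Type u) [TopologicalSpace X] [T0Space X] : PartialOrder X where
  le := specLE
  le_refl x := fun _ _ h => h
  le_trans x y z h1 h2 := fun U hU hx => h2 U hU (h1 U hU hx)
  le_antisymm x y h1 h2 :=
    (inseparable_iff_forall_isOpen.mpr fun U hU => ⟨h1 U hU, h2 U hU⟩).eq

/-- A continuous probability valuation on a topological space: a map from opens to
nonnegative reals that is strict, monotone, modular, continuous (preserves directed
suprema of opens) and normalized. -/
structure IsProbValuation [TopologicalSpace X] (ν : Opens X → NNReal) : Prop where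
  empty : ν ⊥ = 0
  mono : ∀ U V : Opens X, U ≤ V → ν U ≤ ν V
  modular : ∀ U V : Opens X, ν (U ⊔ V) + ν (U ⊓ V) = ν U + ν V
  scont : ∀ S : Set (Opens X), S.Nonempty → DirectedOn (· ≤ ·) S →
    ν (sSup S) = ⨆ U ∈ S, ν U
  total : ν ⊤ = 1

/-- `V_1(X)`: the probability valuations on `X`, ordered pointwise. -/
abbrev ProbVal (X : Type u) [TopologicalSpace X] : Type u :=
  {ν : Opens X → NNReal // IsProbValuation ν}

/-- The weak topology on `V_1(X)`, generated by the sets `[U > a]`. -/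
def weakTop (X : Type u) [TopologicalSpace X] : TopologicalSpace (ProbVal X) :=
  TopologicalSpace.generateFrom
    {S | ∃ (U : Opens X) (a : ℝ), S = {ν : ProbVal X | a < (ν.1 U : ℝ)}}

/-- `ν†(Q) = inf {ν U | U open, Q ⊆ U}`. -/
noncomputable def dagVal [TopologicalSpace X] (ν : Opens X → NNReal) (Q : Set X) :
    NNReal :=
  ⨅ U : {U : Opens X // Q ⊆ U.1}, ν U.1

end Spaces

section Paths

variable {Y : Type u}

/-- A path in a pointed poset: a finite covering chain starting at the least
element. -/
def IsPathIn [PartialOrder Y] (bot : Y) (S : Set Y) : Prop :=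
  ∃ (n : ℕ) (c : Fin (n + 1) → Y), c 0 = bot ∧
    (∀ i : Fin n, c i.castSucc ⋖ c i.succ) ∧ S = Set.range c

/-- The path space `Π(Y)` of a pointed poset, ordered by inclusion. -/
abbrev PathSpace (Y : Type u) [PartialOrder Y] (bot : Y) : Type u :=
  {S : Set Y // IsPathIn bot S}

end Paths

/-! ### Sandwiching a modular set function -/

/-- If `g ≤ f` on the subsets of a finite set `E`, with `g` supermodular and `f` submodular, both
vanishing at `∅`, then some additive set function lies in between. The weight of one point `e` is
chosen first; contracting `e` keeps all the hypotheses. -/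
theorem exists_modular_between {Y : Type*} [DecidableEq Y] (E : Finset Y) :
    ∀ (f g : Finset Y → ℝ), f ∅ = 0 → g ∅ = 0 →
    (∀ A ⊆ E, ∀ B ⊆ E, f (A ∪ B) + f (A ∩ B) ≤ f A + f B) →
    (∀ A ⊆ E, ∀ B ⊆ E, g A + g B ≤ g (A ∪ B) + g (A ∩ B)) →
    (∀ A ⊆ E, g A ≤ f A) →
    ∃ c : Y → ℝ, ∀ A ⊆ E, g A ≤ ∑ e ∈ A, c e ∧ ∑ e ∈ A, c e ≤ f A := by
  induction E using Finset.induction_on with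
  | empty =>
    intro f g hf hg _ _ _
    refine ⟨0, fun A hA => ?_⟩
    obtain rfl := Finset.subset_empty.1 hA
    simp [hf, hg]
  | insert e E he ih =>
    intro f g hf0 hg0 hf hg hfg
    have hsub : ∀ A ⊆ E, A ⊆ insert e E := fun A hA => hA.trans (Finset.subset_insert _ _)
    have hins : ∀ A ⊆ E, insert e A ⊆ insert e E := fun A hA => Finset.insert_subset_insert _ hA
    have hun : ∀ A B : Finset Y, insert e A ∪ B = insert e (A ∪ B) := fun A B => by
      rw [Finset.insert_union]
    have hun' : ∀ A B : Finset Y, A ∪ insert e B = insert e (A ∪ B) := fun A B => by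
      rw [Finset.union_insert]
    have hcap : ∀ A B : Finset Y, B ⊆ E → insert e A ∩ B = A ∩ B := fun A B hB =>
      Finset.insert_inter_of_notMem (fun h => he (hB h))
    have hcap' : ∀ A B : Finset Y, A ⊆ E → A ∩ insert e B = A ∩ B := fun A B hA =>
      Finset.inter_insert_of_notMem (fun h => he (hA h))
    have hcap2 : ∀ A B : Finset Y, insert e A ∩ insert e B = insert e (A ∩ B) := fun A B => by
      rw [Finset.insert_inter_distrib]
    -- every lower bound imposed on the weight of `e` is below every upper bound
    have hcross : ∀ A ⊆ E, ∀ B ⊆ E, g (insert e A) - f A ≤ f (insert e B) - g B := by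
      intro A hA B hB
      have h1 := hg _ (hins A hA) _ (hsub B hB)
      have h2 := hf _ (hsub A hA) _ (hins B hB)
      rw [hun, hcap _ _ hB] at h1
      rw [hun', hcap' _ _ hA] at h2
      have h3 := hfg _ (hins (A ∪ B) (Finset.union_subset hA hB))
      have h4 := hfg _ (hsub (A ∩ B) (Finset.inter_subset_left.trans hA))
      linarith
    obtain ⟨A₀, hA₀, hmax⟩ := Finset.exists_max_image E.powerset
      (fun A => g (insert e A) - f A) ⟨∅, by simp⟩
    rw [Finset.mem_powerset] at hA₀
    set w : ℝ := g (insert e A₀) - f A₀ with hw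
    have hlo : ∀ A ⊆ E, g (insert e A) - f A ≤ w := fun A hA =>
      hmax A (Finset.mem_powerset.2 hA)
    have hhi : ∀ B ⊆ E, w ≤ f (insert e B) - g B := fun B hB => hcross A₀ hA₀ B hB
    obtain ⟨c, hc⟩ := ih (fun A => min (f A) (f (insert e A) - w))
      (fun A => max (g A) (g (insert e A) - w))
      (by
        have := hhi ∅ (by simp)
        rw [hg0] at this
        simp only [hf0]
        rw [min_eq_left]; linarith)
      (by
        have := hlo ∅ (by simp)
        rw [hf0] at this
        simp only [hg0]
        rw [max_eq_left]; linarith)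
      (by
        intro A hA B hB
        have h1 := hf _ (hsub A hA) _ (hsub B hB)
        have h2 := hf _ (hins A hA) _ (hsub B hB)
        have h3 := hf _ (hsub A hA) _ (hins B hB)
        have h4 := hf _ (hins A hA) _ (hins B hB)
        rw [hun, hcap _ _ hB] at h2
        rw [hun', hcap' _ _ hA] at h3
        rw [hun, hun', Finset.insert_idem, hcap2] at h4
        have a1 := min_le_left (f (A ∪ B)) (f (insert e (A ∪ B)) - w)
        have a2 := min_le_right (f (A ∪ B)) (f (insert e (A ∪ B)) - w)
        have a3 := min_le_left (f (A ∩ B)) (f (insert e (A ∩ B)) - w)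
        have a4 := min_le_right (f (A ∩ B)) (f (insert e (A ∩ B)) - w)
        rcases min_choice (f A) (f (insert e A) - w) with h | h <;>
        rcases min_choice (f B) (f (insert e B) - w) with h' | h' <;>
        simp only [h, h'] <;> linarith)
      (by
        intro A hA B hB
        have h1 := hg _ (hsub A hA) _ (hsub B hB)
        have h2 := hg _ (hins A hA) _ (hsub B hB)
        have h3 := hg _ (hsub A hA) _ (hins B hB)
        have h4 := hg _ (hins A hA) _ (hins B hB)
        rw [hun, hcap _ _ hB] at h2
        rw [hun', hcap' _ _ hA] at h3
        rw [hun, hun', Finset.insert_idem, hcap2] at h4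
        have a1 := le_max_left (g (A ∪ B)) (g (insert e (A ∪ B)) - w)
        have a2 := le_max_right (g (A ∪ B)) (g (insert e (A ∪ B)) - w)
        have a3 := le_max_left (g (A ∩ B)) (g (insert e (A ∩ B)) - w)
        have a4 := le_max_right (g (A ∩ B)) (g (insert e (A ∩ B)) - w)
        rcases max_choice (g A) (g (insert e A) - w) with h | h <;>
        rcases max_choice (g B) (g (insert e B) - w) with h' | h' <;>
        simp only [h, h'] <;> linarith)
      (by
        intro A hA
        have h1 := hfg A (hsub A hA)
        have h2 := hfg _ (hins A hA)
        have h3 := hlo A hA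
        have h4 := hhi A hA
        simp only [max_le_iff, le_min_iff]
        refine ⟨⟨?_, ?_⟩, ?_, ?_⟩ <;> linarith)
    refine ⟨Function.update c e w, fun A hA => ?_⟩
    have hsum : ∀ B ⊆ E, ∑ x ∈ B, Function.update c e w x = ∑ x ∈ B, c x := fun B hB =>
      Finset.sum_congr rfl fun x hx => by
        rw [Function.update_of_ne]
        rintro rfl
        exact he (hB hx)
    by_cases heA : e ∈ A
    · obtain ⟨B, hB, rfl⟩ : ∃ B ⊆ E, A = insert e B := by
        refine ⟨A.erase e, ?_, (Finset.insert_erase heA).symm⟩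
        rwa [← Finset.subset_insert_iff]
      have := hc B hB
      rw [Finset.sum_insert (fun h => he (hB h)), hsum B hB, Function.update_self]
      simp only [max_le_iff, le_min_iff] at this
      constructor <;> linarith [this.1.2, this.2.2]
    · have hA' : A ⊆ E := (Finset.subset_insert_iff_of_notMem heA).1 hA
      have := hc A hA'
      rw [hsum A hA']
      simp only [max_le_iff, le_min_iff] at this
      exact ⟨this.1.1, this.2.1⟩

/-! ### Continuous probability valuations -/

section Valuations

variable {Y : Type u} [TopologicalSpace Y]

theorem IsProbValuation.le_one {ν : Opens Y → NNReal} (h : IsProbValuation ν) (U : Opens Y) :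
    ν U ≤ 1 := h.total ▸ h.mono U ⊤ le_top

theorem IsProbValuation.exists_lt {ν : Opens Y → NNReal} (h : IsProbValuation ν)
    {S : Set (Opens Y)} (hS : S.Nonempty) (hd : DirectedOn (· ≤ ·) S) {r : NNReal}
    (hr : r < ν (sSup S)) : ∃ U ∈ S, r < ν U := by
  by_contra! hcon
  rw [h.scont S hS hd] at hr
  exact absurd hr (not_lt.2 (ciSup_le' fun U => ciSup_le' fun hU => hcon U hU))

theorem scont_of_exists_lt {ν : Opens Y → NNReal} (mono : ∀ U V : Opens Y, U ≤ V → ν U ≤ ν V)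
    {S : Set (Opens Y)} (hS : ∀ r < ν (sSup S), ∃ U ∈ S, r < ν U) :
    ν (sSup S) = ⨆ U ∈ S, ν U := by
  apply le_antisymm
  · refine le_of_forall_lt fun r hr => ?_
    obtain ⟨U, hU, hrU⟩ := hS r hr
    have hb : BddAbove (Set.range fun U => ⨆ _ : U ∈ S, ν U) := by
      refine ⟨ν ⊤, ?_⟩
      rintro _ ⟨U, rfl⟩
      exact ciSup_le' fun _ => mono _ _ le_top
    refine lt_of_lt_of_le hrU (le_ciSup_of_le hb U ?_)
    have : Nonempty (U ∈ S) := ⟨hU⟩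
    simp [hU]
  · exact ciSup_le' fun U => ciSup_le' fun hU => mono _ _ (le_sSup hU)

/-- The pointwise supremum of a directed set of probability valuations. -/
noncomputable def supVal (d : Set (ProbVal Y)) (U : Opens Y) : NNReal := ⨆ ν : d, ν.1.1 U

theorem le_supVal {d : Set (ProbVal Y)} {ν : ProbVal Y} (hν : ν ∈ d) (U : Opens Y) :
    ν.1 U ≤ supVal d U := by
  refine le_ciSup (f := fun ν : d => ν.1.1 U) ⟨1, ?_⟩ ⟨ν, hν⟩
  rintro _ ⟨ν, rfl⟩
  exact ν.1.2.le_one U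

theorem supVal_le {d : Set (ProbVal Y)} {U : Opens Y} {r : NNReal} (h : ∀ ν ∈ d, ν.1 U ≤ r) :
    supVal d U ≤ r := ciSup_le' fun ν => h ν.1 ν.2

theorem exists_lt_of_lt_supVal {d : Set (ProbVal Y)} {U : Opens Y} {r : NNReal}
    (h : r < supVal d U) : ∃ ν ∈ d, r < ν.1 U := by
  by_contra! hcon
  exact absurd h (not_lt.2 (supVal_le hcon))

theorem supVal_add {d : Set (ProbVal Y)} (hne : d.Nonempty) (hd : DirectedOn (· ≤ ·) d)
    (U V : Opens Y) :
    IsLUB ((fun ν : ProbVal Y => ν.1 U + ν.1 V) '' d) (supVal d U + supVal d V) := by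
  constructor
  · rintro _ ⟨ν, hν, rfl⟩
    exact add_le_add (le_supVal hν U) (le_supVal hν V)
  · intro b hb
    refine le_of_forall_pos_le_add fun ε hε => ?_
    have key : ∀ W : Opens Y, ∃ ν ∈ d, supVal d W < ν.1 W + ε / 2 := by
      intro W
      by_contra! hcon
      obtain ⟨ν₀, h₀⟩ := hne
      have h1 : supVal d W ≤ supVal d W - ε / 2 := supVal_le fun ν hν =>
        le_tsub_of_add_le_right (hcon ν hν)
      have h2 : 0 < supVal d W :=
        lt_of_lt_of_le (by positivity) ((le_add_self).trans (hcon ν₀ h₀))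
      exact absurd h1 (not_le.2 (tsub_lt_self h2 (by positivity)))
    obtain ⟨ν₁, h₁, h₁'⟩ := key U
    obtain ⟨ν₂, h₂, h₂'⟩ := key V
    obtain ⟨ν, hν, l₁, l₂⟩ := hd ν₁ h₁ ν₂ h₂
    have h3 : ν.1 U + ν.1 V ≤ b := hb ⟨ν, hν, rfl⟩
    calc supVal d U + supVal d V ≤ (ν₁.1 U + ε / 2) + (ν₂.1 V + ε / 2) :=
          (add_lt_add h₁' h₂').le
      _ ≤ (ν.1 U + ε / 2) + (ν.1 V + ε / 2) := by gcongr; exacts [l₁ U, l₂ V]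
      _ = (ν.1 U + ν.1 V) + (ε / 2 + ε / 2) := by ring
      _ ≤ b + ε := by rw [add_halves]; gcongr

theorem isProbValuation_supVal {d : Set (ProbVal Y)} (hne : d.Nonempty)
    (hd : DirectedOn (· ≤ ·) d) : IsProbValuation (supVal d) := by
  have mono : ∀ U V : Opens Y, U ≤ V → supVal d U ≤ supVal d V := fun U V hUV =>
    supVal_le fun ν hν => (ν.2.mono U V hUV).trans (le_supVal hν V)
  refine ⟨?_, mono, ?_, ?_, ?_⟩
  · exact le_antisymm (supVal_le fun ν _ => ν.2.empty.le) zero_le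
  · intro U V
    refine (supVal_add hne hd (U ⊔ V) (U ⊓ V)).unique ?_
    have := supVal_add hne hd U V
    rwa [show (fun ν : ProbVal Y => ν.1 U + ν.1 V) = fun ν => ν.1 (U ⊔ V) + ν.1 (U ⊓ V) from
      funext fun ν => (ν.2.modular U V).symm] at this
  · intro S hS hS'
    refine scont_of_exists_lt mono fun r hr => ?_
    obtain ⟨ν, hν, h⟩ := exists_lt_of_lt_supVal hr
    obtain ⟨U, hU, h⟩ := ν.2.exists_lt hS hS' h
    exact ⟨U, hU, h.trans_le (le_supVal hν U)⟩
  · obtain ⟨ν, hν⟩ := hne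
    exact le_antisymm (supVal_le fun ν _ => ν.2.total.le) (ν.2.total ▸ le_supVal hν ⊤)

theorem isLUB_supVal {d : Set (ProbVal Y)} (hne : d.Nonempty) (hd : DirectedOn (· ≤ ·) d) :
    IsLUB d (⟨supVal d, isProbValuation_supVal hne hd⟩ : ProbVal Y) :=
  ⟨fun _ hν U => le_supVal hν U, fun _ hb _ => supVal_le fun _ hν => hb hν _⟩

theorem isDcpo_probVal : IsDcpo (ProbVal Y) := fun _ hne hd => ⟨_, isLUB_supVal hne hd⟩

theorem exists_lt_of_isLUB {d : Set (ProbVal Y)} (hne : d.Nonempty) (hd : DirectedOn (· ≤ ·) d)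
    {a : ProbVal Y} (ha : IsLUB d a) {U : Opens Y} {r : NNReal} (h : r < a.1 U) :
    ∃ ν ∈ d, r < ν.1 U := by
  obtain rfl := ha.unique (isLUB_supVal hne hd)
  exact exists_lt_of_lt_supVal h

open Classical in
/-- The simple valuation `∑ e ∈ E, w e • δ_e`. -/
noncomputable def simpleVal (E : Finset Y) (w : Y → NNReal) (U : Opens Y) : NNReal :=
  ∑ e ∈ E with e ∈ U, w e

theorem isProbValuation_simpleVal {E : Finset Y} {w : Y → NNReal} (hw : ∑ e ∈ E, w e = 1) :
    IsProbValuation (simpleVal E w) := by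
  classical
  have mono : ∀ U V : Opens Y, U ≤ V → simpleVal E w U ≤ simpleVal E w V := by
    intro U V hUV
    unfold simpleVal
    exact Finset.sum_le_sum_of_subset (Finset.monotone_filter_right _ fun e _ he => hUV he)
  refine ⟨by simp [simpleVal], mono, ?_, ?_, by simpa [simpleVal] using hw⟩
  · intro U V
    simp only [simpleVal, Finset.sum_filter, ← Finset.sum_add_distrib]
    refine Finset.sum_congr rfl fun e _ => ?_
    by_cases h1 : e ∈ U <;> by_cases h2 : e ∈ V <;> simp [← SetLike.mem_coe] <;> simp [h1, h2]
  · intro S hS hd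
    refine scont_of_exists_lt mono fun r hr => ?_
    obtain ⟨U, hU, hsub⟩ : ∃ U ∈ S, ∀ e ∈ E, e ∈ sSup S → e ∈ U := by
      have hdir : DirectedOn (fun U V : Opens Y => (U : Set Y) ⊆ V) S := hd
      obtain ⟨U, hU, h⟩ := hdir.exists_mem_subset_of_finset_subset_biUnion hS
        (s := E.filter (· ∈ sSup S)) (fun e he => by
          have := (Finset.mem_filter.1 (Finset.mem_coe.1 he)).2
          rw [Opens.mem_sSup] at this
          simpa using this)
      exact ⟨U, hU, fun e he he' => h (Finset.mem_coe.2 (Finset.mem_filter.2 ⟨he, he'⟩))⟩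
    refine ⟨U, hU, hr.trans_le ?_⟩
    unfold simpleVal
    refine Finset.sum_le_sum_of_subset fun e he => ?_
    rw [Finset.mem_filter] at he ⊢
    exact ⟨he.1, hsub e he.1 he.2⟩

end Valuations

/-! ### Quasi-deflations with finite image -/

section QuasiDeflations

/-- In a directed set, finitely many upward-closed properties that hold somewhere hold jointly
somewhere. -/
theorem exists_mem_forall_of_finite {α ι : Type*} [Preorder α] {d : Set α} (hne : d.Nonempty)
    (hd : DirectedOn (· ≤ ·) d) {F : Set ι} (hF : F.Finite) {P : ι → α → Prop}
    (hP : ∀ i ∈ F, ∃ z ∈ d, P i z) (hmono : ∀ i z z', z ≤ z' → P i z → P i z') :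
    ∃ z ∈ d, ∀ i ∈ F, P i z := by
  induction F, hF using Set.Finite.induction_on with
  | empty => exact ⟨hne.some, hne.some_mem, by simp⟩
  | @insert i F _ _ ih =>
    obtain ⟨z, hz, h⟩ := ih fun j hj => hP j (Set.mem_insert_of_mem _ hj)
    obtain ⟨z', hz', h'⟩ := hP i (Set.mem_insert _ _)
    obtain ⟨y, hy, l, l'⟩ := hd z hz z' hz'
    refine ⟨y, hy, ?_⟩
    rintro j (rfl | hj)
    · exact hmono _ _ _ l' h'
    · exact hmono _ _ _ l (h j hj)

theorem scottOpen_not_le {β : Type u} [Preorder β] (P : β) : ScottOpen {Q : β | ¬ Q ≤ P} := by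
  refine ⟨fun a b hab ha hb => ha (hab.trans hb), fun d _ _ a ha hmem => ?_⟩
  by_contra hcon
  refine hmem (ha.2 fun z hz => ?_)
  by_contra hz'
  exact hcon ⟨z, hz, hz'⟩

variable {α : Type u} [Preorder α] {φ : α → FinCompacts α}

theorem IsQuasiDeflation.scottOpen_preimage_of_scottOpen (h : IsQuasiDeflation φ)
    {T : Set (FinCompacts α)} (hT : ScottOpen T) : ScottOpen (φ ⁻¹' T) :=
  (@continuous_def _ _ (scottTop α) (scottTop (FinCompacts α)) φ).1 h.1 T hT

theorem IsQuasiDeflation.mono (h : IsQuasiDeflation φ) : Monotone φ := by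
  intro x y hxy
  by_contra hcon
  exact (h.scottOpen_preimage_of_scottOpen (scottOpen_not_le (φ y))).1 hxy hcon le_rfl

/-- Since the image is finite, the preimage of any upper set is Scott-open. -/
theorem IsQuasiDeflation.scottOpen_preimage (h : IsQuasiDeflation φ) {T : Set (FinCompacts α)}
    (hT : IsUpperSet T) : ScottOpen (φ ⁻¹' T) := by
  refine ⟨fun x y hxy hx => hT (h.mono hxy) hx, fun d hne hd a ha hmem => ?_⟩
  obtain ⟨z, hz, hz'⟩ := exists_mem_forall_of_finite hne hd
    (F := {Q ∈ Set.range φ | ¬ φ a ≤ Q}) (h.2.2.subset (Set.sep_subset _ _))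
    (P := fun Q z => ¬ φ z ≤ Q)
    (fun Q hQ => (h.scottOpen_preimage_of_scottOpen (scottOpen_not_le Q)).2 d hne hd a ha hQ.2)
    (fun Q z z' hzz' hz hz' => hz ((h.mono hzz').trans hz'))
  refine ⟨z, hz, hT (a := φ a) ?_ hmem⟩
  by_contra hcon
  exact hz' (φ z) ⟨⟨z, rfl⟩, hcon⟩ le_rfl

/-- A monotone map is continuous as soon as its value at a directed supremum is already reached
in the directed set. -/
theorem isQuasiDeflation_of_attained (hmono : Monotone φ)
    (hatt : ∀ d : Set α, d.Nonempty → DirectedOn (· ≤ ·) d → ∀ a, IsLUB d a →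
      ∃ z ∈ d, φ a ≤ φ z)
    (hmem : ∀ x, x ∈ (φ x).1) (hfin : (Set.range φ).Finite) : IsQuasiDeflation φ := by
  refine ⟨?_, hmem, hfin⟩
  let _ := scottTop α
  let _ := scottTop (FinCompacts α)
  refine continuous_def.2 fun T hT => ?_
  refine ⟨fun x y hxy hx => hT.1 (hmono hxy) hx, fun d hne hd a ha hmem => ?_⟩
  obtain ⟨z, hz, h⟩ := hatt d hne hd a ha
  exact ⟨z, hz, hT.1 h hmem⟩

end QuasiDeflations

/-! ### Squaring produces a generating family -/

section Squares

open Filter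

variable {Y : Type u} [TopologicalSpace Y]

/-- The tolerance used at stage `n`. -/
noncomputable def tol (n : ℕ) : NNReal := 1 / (n + 1)

theorem eventually_tol {a r : NNReal} (h : a < r) : ∀ᶠ n in atTop, a + tol n + tol n < r := by
  have h1 : Tendsto (fun n : ℕ => (a : ℝ) + 1 / ((n : ℝ) + 1) + 1 / ((n : ℝ) + 1)) atTop
      (nhds (a + 0 + 0)) :=
    (tendsto_const_nhds.add tendsto_one_div_add_atTop_nhds_zero_nat).add
      tendsto_one_div_add_atTop_nhds_zero_nat
  have h2 : (a : ℝ) + 0 + 0 < r := by simpa using h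
  filter_upwards [h1.eventually_lt_const h2] with n hn
  rw [← NNReal.coe_lt_coe]
  simpa [tol] using hn

variable (O : ℕ → Opens Y → Opens Y) (D : ℕ → Set (ProbVal Y))

/-- The members of the finite set `D n` that dominate `ν` up to `tol n`, when each open set `V`
is shrunk to `O n V` on the side of `ν`. -/
def approxSet (n : ℕ) (ν : ProbVal Y) : Set (ProbVal Y) :=
  {ξ | ξ ∈ D n ∧ ∀ V, ν.1 (O n V) ≤ ξ.1 V + tol n}

/-- The twofold iterate of `approxSet`. -/
def approxSet₂ (n : ℕ) (ν : ProbVal Y) : Set (ProbVal Y) :=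
  {η | ∃ ξ ∈ approxSet O D n ν, η ∈ approxSet O D n ξ}

variable {O D}

theorem approxSet_anti {n : ℕ} {ν ν' : ProbVal Y} (h : ν ≤ ν') :
    approxSet O D n ν' ⊆ approxSet O D n ν := fun _ hξ =>
  ⟨hξ.1, fun V => (h _).trans (hξ.2 V)⟩

theorem approxSet₂_subset {n : ℕ} {ν ν' : ProbVal Y}
    (h : approxSet O D n ν' ⊆ approxSet O D n ν) :
    approxSet₂ O D n ν' ⊆ approxSet₂ O D n ν := fun _ ⟨ξ, hξ, hη⟩ => ⟨ξ, h hξ, hη⟩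

theorem le_of_mem_approxSet₂ {n : ℕ} {ν μ : ProbVal Y} (h : μ ∈ upClos (approxSet₂ O D n ν))
    (V : Opens Y) : ν.1 (O n (O n V)) ≤ μ.1 V + tol n + tol n := by
  obtain ⟨η, ⟨ξ, hξ, hη⟩, hημ⟩ := h
  calc ν.1 (O n (O n V)) ≤ ξ.1 (O n V) + tol n := hξ.2 _
    _ ≤ η.1 V + tol n + tol n := by gcongr; exact hη.2 V
    _ ≤ μ.1 V + tol n + tol n := by gcongr; exact hημ V

theorem eventually_lt_shrink_shrink (hOV : ∀ n, Monotone (O n)) (hOn : Monotone O)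
    (hO : ∀ V, ∀ x ∈ V, ∃ n, x ∈ O n V) (ν : ProbVal Y) {V : Opens Y} {r : NNReal}
    (h : r < ν.1 V) : ∀ᶠ n in atTop, r < ν.1 (O n (O n V)) := by
  have hm : Monotone fun n => O n (O n V) := fun m n hmn =>
    (hOV m (hOn hmn V)).trans (hOn hmn _)
  have hV : V ≤ sSup (Set.range fun n => O n (O n V)) := by
    intro x hx
    obtain ⟨i, hi⟩ := hO V x hx
    obtain ⟨k, hk⟩ := hO _ x hi
    refine Opens.mem_sSup.2 ⟨_, ⟨max i k, rfl⟩, ?_⟩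
    exact (hOn (le_max_right i k) _) ((hOV k (hOn (le_max_left i k) V)) hk)
  obtain ⟨_, ⟨N, rfl⟩, hN⟩ := ν.2.exists_lt (Set.range_nonempty _)
    (directedOn_range.2 hm.directed_le) (h.trans_le (ν.2.mono _ _ hV))
  filter_upwards [eventually_ge_atTop N] with n hn
  exact hN.trans_le (ν.2.mono _ _ (hm hn))

/-- Near `ξ`, in the sense of a fine enough `approxSet₂`, the set `approxSet O D j` can only
shrink: each of the finitely many excluded elements of `D j` is excluded by a strict inequality. -/
theorem eventually_approxSet_subset (hOV : ∀ n, Monotone (O n)) (hOn : Monotone O)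
    (hO : ∀ V, ∀ x ∈ V, ∃ n, x ∈ O n V) (hD : ∀ n, (D n).Finite) (j : ℕ) (ξ : ProbVal Y) :
    ∀ᶠ k in atTop, ∀ μ ∈ upClos (approxSet₂ O D k ξ),
      approxSet O D j μ ⊆ approxSet O D j ξ := by
  have key : ∀ η ∈ D j \ approxSet O D j ξ, ∀ᶠ k in atTop,
      ∀ μ ∈ upClos (approxSet₂ O D k ξ), η ∉ approxSet O D j μ := by
    rintro η ⟨hη, hη'⟩
    obtain ⟨V, hV⟩ : ∃ V, η.1 V + tol j < ξ.1 (O j V) := by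
      by_contra! hcon
      exact hη' ⟨hη, hcon⟩
    obtain ⟨r, hr, hr'⟩ := exists_between hV
    filter_upwards [eventually_lt_shrink_shrink hOV hOn hO ξ hr', eventually_tol hr]
      with k hk hk' μ hμ hημ
    refine absurd (hk.trans_le (le_of_mem_approxSet₂ hμ _)) (not_lt.2 (le_trans ?_ hk'.le))
    gcongr
    exact hημ.2 V
  filter_upwards [((hD j).subset Set.sdiff_subset |>.eventually_all).2 key] with k hk μ hμ η hη
  by_contra hcon
  exact hk η ⟨hη.1, hcon⟩ μ hμ hη

/-- If every `ν` has some `ξ ≤ ν` in each `approxSet O D n ν`, then the maps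
`ν ↦ ↑(approxSet₂ O D n ν)` form a generating family of quasi-deflations. Passing to the twofold
iterate is what makes the family directed: with `e ≤ ν` in `approxSet O D j ν`, any fine enough
`k` satisfies `↑(approxSet₂ O D k ν) ⊆ ↑(approxSet₂ O D k e) ⊆ ↑(approxSet O D j e)`, and `k` can
be chosen uniformly because `e` ranges over the finite set `D j`. -/
theorem exists_generatingFamily (hOV : ∀ n, Monotone (O n)) (hOn : Monotone O)
    (hO : ∀ V, ∀ x ∈ V, ∃ n, x ∈ O n V) (hD : ∀ n, (D n).Finite)
    (hcore : ∀ n ν, ∃ ξ ∈ approxSet O D n ν, ξ ≤ ν) :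
    ∃ φ : ULift.{u} ℕ → ProbVal Y → FinCompacts (ProbVal Y), IsGeneratingFamily φ := by
  have hfin : ∀ n ν, (approxSet₂ O D n ν).Finite := fun n ν =>
    (hD n).subset fun η ⟨_, _, hη⟩ => hη.1
  have hne : ∀ n ν, (approxSet₂ O D n ν).Nonempty := fun n ν => by
    obtain ⟨ξ, hξ, _⟩ := hcore n ν
    obtain ⟨η, hη, _⟩ := hcore n ξ
    exact ⟨η, ξ, hξ, hη⟩
  have hmem : ∀ n ν, ν ∈ upClos (approxSet₂ O D n ν) := fun n ν => by
    obtain ⟨ξ, hξ, hξν⟩ := hcore n ν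
    obtain ⟨η, hη, hηξ⟩ := hcore n ξ
    exact ⟨η, ⟨ξ, hξ, hη⟩, hηξ.trans hξν⟩
  have hup : ∀ {s t : Set (ProbVal Y)}, s ⊆ t → upClos s ⊆ upClos t :=
    fun hst _ ⟨e, he, hex⟩ => ⟨e, hst he, hex⟩
  refine ⟨fun n ν => ⟨upClos (approxSet₂ O D n.down ν), _, hfin _ _, hne _ _, rfl⟩,
    inferInstance, ?_, ?_, ?_⟩
  · have hdir : ∀ j, ∀ᶠ k in atTop, ∀ ν,
        upClos (approxSet₂ O D k ν) ⊆ upClos (approxSet₂ O D j ν) := by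
      intro j
      filter_upwards [((hD j).eventually_all).2 fun e _ =>
        eventually_approxSet_subset hOV hOn hO hD j e] with k hk ν μ hμ
      obtain ⟨e, he, heν⟩ := hcore j ν
      have h1 : μ ∈ upClos (approxSet₂ O D k e) :=
        hup (approxSet₂_subset (approxSet_anti heν)) hμ
      obtain ⟨η, hη, hημ⟩ := hcore j μ
      exact ⟨η, ⟨e, he, hk e he.1 μ h1 hη⟩, hημ⟩
    intro i j
    obtain ⟨k, h1, h2⟩ := ((hdir i.down).and (hdir j.down)).exists
    exact ⟨⟨k⟩, h1, h2⟩
  · rintro ⟨n⟩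
    refine isQuasiDeflation_of_attained ?_ ?_ (hmem n) ?_
    · exact fun ν ν' h => hup (approxSet₂_subset (approxSet_anti h))
    · intro d hd hdir a ha
      obtain ⟨z, hz, h⟩ := exists_mem_forall_of_finite hd hdir
        (F := D n \ approxSet O D n a) ((hD n).subset Set.sdiff_subset)
        (P := fun ξ z => ξ ∉ approxSet O D n z)
        (by
          rintro ξ ⟨hξ, hξ'⟩
          obtain ⟨V, hV⟩ : ∃ V, ξ.1 V + tol n < a.1 (O n V) := by
            by_contra! hcon
            exact hξ' ⟨hξ, hcon⟩
          obtain ⟨z, hz, h⟩ := exists_lt_of_isLUB hd hdir ha hV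
          exact ⟨z, hz, fun h' => absurd (h'.2 V) (not_le.2 h)⟩)
        (fun ξ z z' hzz' h h' => h (approxSet_anti hzz' h'))
      refine ⟨z, hz, hup (approxSet₂_subset fun ξ hξ => ?_)⟩
      by_contra hcon
      exact h ξ ⟨hξ.1, hcon⟩ hξ
    · have h1 : (Set.range fun ν => approxSet₂ O D n ν).Finite :=
        (hD n).finite_subsets.subset (by
          rintro _ ⟨ν, rfl⟩
          exact fun η ⟨_, _, hη⟩ => hη.1)
      refine Set.Finite.of_finite_image (f := Subtype.val) ((h1.image upClos).subset ?_)
        Subtype.val_injective.injOn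
      rintro _ ⟨_, ⟨ν, rfl⟩, rfl⟩
      exact ⟨_, ⟨ν, rfl⟩, rfl⟩
  · intro ν
    ext μ
    simp only [Set.mem_iInter, Set.mem_Ici]
    constructor
    · intro h V
      refine le_of_forall_lt fun r hr => ?_
      by_contra! hcon
      obtain ⟨r', h1, h2⟩ := exists_between hr
      obtain ⟨n, hn, hn'⟩ := ((eventually_lt_shrink_shrink hOV hOn hO ν h2).and
        (eventually_tol h1)).exists
      refine absurd (hn.trans_le (le_of_mem_approxSet₂ (h ⟨n⟩) V)) (not_lt.2 (le_trans ?_ hn'.le))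
      gcongr
    · rintro h ⟨n⟩
      obtain ⟨e, he, heν⟩ := hmem n ν
      exact ⟨e, he, heν.trans h⟩

end Squares

/-! ### Approximating a valuation from below by simple valuations -/

section SimpleApprox

variable {Y : Type u} [TopologicalSpace Y]

/-- The probability valuations supported on `E` whose point masses are multiples of
`1 / ((n + 1) * |E|)`. The factor `|E|` keeps the total rounding error below `tol n`. -/
def gridVals (E : Finset Y) (n : ℕ) : Set (ProbVal Y) :=
  {ξ | ∃ k : Y → ℕ, ∑ e ∈ E, k e = (n + 1) * E.card ∧
    ξ.1 = simpleVal E fun e => (k e : NNReal) / (((n + 1) * E.card : ℕ) : NNReal)}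

theorem finite_gridVals (E : Finset Y) (n : ℕ) : (gridVals E n).Finite := by
  classical
  refine Set.Finite.of_finite_image (f := Subtype.val) ?_ Subtype.val_injective.injOn
  let M : ℕ := (n + 1) * E.card
  refine (Set.finite_range fun k : E → Fin (M + 1) =>
    simpleVal E fun e => ((if h : e ∈ E then (k ⟨e, h⟩ : ℕ) else 0 : ℕ) : NNReal) / (M : NNReal))
    |>.subset ?_
  rintro _ ⟨ξ, ⟨k, hk, hξ⟩, rfl⟩
  have hle : ∀ e ∈ E, k e < M + 1 := fun e he =>
    Nat.lt_succ_of_le ((Finset.single_le_sum (f := k) (fun _ _ => Nat.zero_le _) he).trans hk.le)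
  refine ⟨fun e => ⟨k e.1, hle e.1 e.2⟩, ?_⟩
  rw [hξ]
  funext U
  refine Finset.sum_congr rfl fun e he => ?_
  simp [(Finset.mem_filter.1 he).1, M]

/-- The outer value `ν†(↑A)` of a finite set. -/
noncomputable def outerVal (ν : Opens Y → NNReal) (A : Finset Y) : NNReal :=
  ⨅ V : {V : Opens Y // ∀ e ∈ A, e ∈ V}, ν V.1

theorem outerVal_le (ν : Opens Y → NNReal) {A : Finset Y} {V : Opens Y} (h : ∀ e ∈ A, e ∈ V) :
    outerVal ν A ≤ ν V :=
  ciInf_le' (fun V : {V : Opens Y // ∀ e ∈ A, e ∈ V} => ν V.1) ⟨V, h⟩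

theorem le_outerVal {ν : Opens Y → NNReal} {A : Finset Y} {r : NNReal}
    (h : ∀ V : Opens Y, (∀ e ∈ A, e ∈ V) → r ≤ ν V) : r ≤ outerVal ν A := by
  have : Nonempty {V : Opens Y // ∀ e ∈ A, e ∈ V} := ⟨⟨⊤, fun _ _ => trivial⟩⟩
  exact le_ciInf fun V => h V.1 V.2

theorem outerVal_submodular [DecidableEq Y] {ν : Opens Y → NNReal} (hν : IsProbValuation ν)
    (A B : Finset Y) : outerVal ν (A ∪ B) + outerVal ν (A ∩ B) ≤ outerVal ν A + outerVal ν B := by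
  have : ∀ A : Finset Y, Nonempty {V : Opens Y // ∀ e ∈ A, e ∈ V} :=
    fun A => ⟨⟨⊤, fun _ _ => trivial⟩⟩
  refine NNReal.le_iInf_add_iInf fun U V => ?_
  rw [← hν.modular]
  refine add_le_add (outerVal_le ν fun e he => ?_) (outerVal_le ν fun e he => ?_)
  · rcases Finset.mem_union.1 he with h | h
    · exact Or.inl (U.2 e h)
    · exact Or.inr (V.2 e h)
  · rw [Finset.mem_inter] at he
    exact ⟨U.2 e he.1, V.2 e he.2⟩

/-- Given open sets `G A`, for `A ⊆ E`, that are compatible with intersections and contained in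
every open neighbourhood of `A`, any `ν` has a grid valuation `ξ ≤ ν` giving every open
neighbourhood of `A` at least the mass `ν (G A)`, up to `tol n`. The map `A ↦ ν (G A)` is
supermodular and `A ↦ ν†(↑A)` is submodular; the masses of `ξ` come from an additive map between
them, rounded down, with the deficit moved to the least element. -/
theorem exists_mem_gridVals [DecidableEq Y] {E : Finset Y} {bot : Y} (hbE : bot ∈ E)
    (hbot : ∀ U : Opens Y, bot ∈ U → U = ⊤) (G : Finset Y → Opens Y)
    (hGm : ∀ A B, A ⊆ B → G A ≤ G B) (hGi : ∀ A B, G A ⊓ G B ≤ G (A ∩ B))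
    (hGV : ∀ A ⊆ E, ∀ V : Opens Y, (∀ e ∈ A, e ∈ V) → G A ≤ V)
    (ν : ProbVal Y) (n : ℕ) :
    ∃ ξ ∈ gridVals E n, ξ ≤ ν ∧
      ∀ A ⊆ E, ∀ V : Opens Y, (∀ e ∈ A, e ∈ V) → ν.1 (G A) ≤ ξ.1 V + tol n := by
  classical
  have hfg : ∀ A ⊆ E, ν.1 (G A) ≤ outerVal ν.1 A := fun A hA =>
    le_outerVal fun V hV => ν.2.mono _ _ (hGV A hA V hV)
  have hf0 : outerVal ν.1 ∅ = 0 :=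
    le_antisymm ((outerVal_le ν.1 (V := ⊥) (by simp)).trans ν.2.empty.le) zero_le
  have hg0 : ν.1 (G ∅) = 0 := le_antisymm ((hfg ∅ (by simp)).trans hf0.le) zero_le
  obtain ⟨c, hc⟩ := exists_modular_between E (fun A => (outerVal ν.1 A : ℝ))
    (fun A => (ν.1 (G A) : ℝ)) (by simp [hf0]) (by simp [hg0])
    (fun A _ B _ => by exact_mod_cast outerVal_submodular ν.2 A B)
    (fun A _ B _ => by
      have h1 := ν.2.modular (G A) (G B)
      have h2 := ν.2.mono _ _ (sup_le (hGm A (A ∪ B) Finset.subset_union_left)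
        (hGm B (A ∪ B) Finset.subset_union_right))
      have h3 := ν.2.mono _ _ (hGi A B)
      have : ν.1 (G A) + ν.1 (G B) ≤ ν.1 (G (A ∪ B)) + ν.1 (G (A ∩ B)) :=
        h1 ▸ add_le_add h2 h3
      exact_mod_cast this)
    (fun A hA => by exact_mod_cast hfg A hA)
  have hc0 : ∀ e ∈ E, 0 ≤ c e := fun e he => by
    have := (hc {e} (by simpa using he)).1
    rw [Finset.sum_singleton] at this
    exact le_trans (NNReal.coe_nonneg _) this
  set M : ℕ := (n + 1) * E.card with hM
  have hcard : 0 < E.card := Finset.card_pos.2 ⟨bot, hbE⟩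
  have hMpos : 0 < M := by positivity
  have hMR : (0 : ℝ) < M := by exact_mod_cast hMpos
  have hfloor : ∀ A ⊆ E, ((∑ e ∈ A, ⌊M * c e⌋₊ : ℕ) : ℝ) ≤ M * ∑ e ∈ A, c e := by
    intro A hA
    rw [Finset.mul_sum, Nat.cast_sum]
    exact Finset.sum_le_sum fun e he => Nat.floor_le (mul_nonneg hMR.le (hc0 e (hA he)))
  have hfloor' : ∀ A ⊆ E, M * ∑ e ∈ A, c e ≤ ((∑ e ∈ A, ⌊M * c e⌋₊ : ℕ) : ℝ) + E.card := by
    intro A hA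
    have h1 : M * ∑ e ∈ A, c e ≤ ∑ e ∈ A, ((⌊M * c e⌋₊ : ℝ) + 1) := by
      rw [Finset.mul_sum]
      exact Finset.sum_le_sum fun e _ => (Nat.lt_floor_add_one _).le
    rw [Finset.sum_add_distrib, Finset.sum_const, nsmul_eq_mul, mul_one] at h1
    have h2 : (A.card : ℝ) ≤ E.card := by exact_mod_cast Finset.card_le_card hA
    push_cast
    linarith
  have htot : ∑ e ∈ E.erase bot, ⌊M * c e⌋₊ ≤ M := by
    have h1 := hfloor _ (Finset.erase_subset bot E)
    have h2 := (hc _ (Finset.erase_subset bot E)).2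
    have h3 : (outerVal ν.1 (E.erase bot) : ℝ) ≤ 1 := by
      exact_mod_cast (outerVal_le ν.1 (V := ⊤) fun _ _ => trivial).trans ν.2.total.le
    have : ((∑ e ∈ E.erase bot, ⌊M * c e⌋₊ : ℕ) : ℝ) ≤ M :=
      h1.trans (mul_le_of_le_one_right hMR.le (h2.trans h3))
    exact_mod_cast this
  let k : Y → ℕ := fun e =>
    if e = bot then M - ∑ e ∈ E.erase bot, ⌊M * c e⌋₊ else ⌊M * c e⌋₊
  have hk : ∑ e ∈ E, k e = M := by
    rw [← Finset.add_sum_erase E k hbE]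
    have : ∑ e ∈ E.erase bot, k e = ∑ e ∈ E.erase bot, ⌊M * c e⌋₊ :=
      Finset.sum_congr rfl fun e he => if_neg (Finset.ne_of_mem_erase he)
    rw [this]
    simp only [k, if_true]
    omega
  have hw : ∑ e ∈ E, (k e : NNReal) / (M : NNReal) = 1 := by
    rw [← Finset.sum_div, ← Nat.cast_sum, hk, div_self (by exact_mod_cast hMpos.ne')]
  have hprob := isProbValuation_simpleVal hw
  -- away from the least element, only the rounded masses are counted
  have hval : ∀ V : Opens Y, bot ∉ V →
      M * (simpleVal E (fun e => (k e : NNReal) / (M : NNReal)) V : ℝ) =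
        ((∑ e ∈ E with e ∈ (V : Set Y), ⌊M * c e⌋₊ : ℕ) : ℝ) := by
    intro V hV
    simp only [simpleVal, ← Finset.sum_div]
    push_cast
    rw [mul_div_cancel₀ _ hMR.ne']
    refine Finset.sum_congr (by ext; simp) fun e he => ?_
    have : e ≠ bot := by
      rintro rfl
      exact hV (Finset.mem_filter.1 he).2
    simp [k, this]
  refine ⟨⟨_, hprob⟩, ⟨k, hk, rfl⟩, fun V => ?_, fun A hA V hAV => ?_⟩
  · by_cases hV : bot ∈ V
    · obtain rfl := hbot V hV
      exact (hprob.total.trans ν.2.total.symm).le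
    · have h1 := hfloor (E.filter (· ∈ (V : Set Y))) (Finset.filter_subset _ _)
      have h2 := (hc (E.filter (· ∈ (V : Set Y))) (Finset.filter_subset _ _)).2
      have h3 : (outerVal ν.1 (E.filter (· ∈ (V : Set Y))) : ℝ) ≤ ν.1 V := by
        exact_mod_cast outerVal_le ν.1 fun e he => (Finset.mem_filter.1 he).2
      rw [← hval V hV] at h1
      have h4 := (le_of_mul_le_mul_left h1 hMR).trans (h2.trans h3)
      exact_mod_cast h4
  · by_cases hV : bot ∈ V
    · obtain rfl := hbot V hV
      exact (ν.2.le_one _).trans (hprob.total.ge.trans le_self_add)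
    · have hsub : A ⊆ E.filter (· ∈ (V : Set Y)) := fun e he =>
        Finset.mem_filter.2 ⟨hA he, hAV e he⟩
      have h1 := hfloor' A hA
      have h2 := (hc A hA).1
      have h3 : ((∑ e ∈ A, ⌊M * c e⌋₊ : ℕ) : ℝ) ≤
          ((∑ e ∈ E with e ∈ (V : Set Y), ⌊M * c e⌋₊ : ℕ) : ℝ) := by
        exact_mod_cast Finset.sum_le_sum_of_subset hsub
      rw [← hval V hV] at h3
      have h4 : (E.card : ℝ) = M * tol n := by
        have : (n : ℝ) + 1 ≠ 0 := by positivity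
        simp only [hM, tol]
        push_cast
        field_simp
      have h5 : M * (ν.1 (G A) : ℝ) ≤
          M * ((simpleVal E (fun e => (k e : NNReal) / (M : NNReal)) V : ℝ) + tol n) := by
        have := mul_le_mul_of_nonneg_left h2 hMR.le
        rw [mul_add, ← h4]
        linarith
      have h6 := le_of_mul_le_mul_left h5 hMR
      exact_mod_cast h6

end SimpleApprox

/-! ### Shrinking Scott-open sets along a sequence of quasi-deflations -/

section Shrinking

/-- A decreasing sequence of finitary compacts whose intersection lies in a Scott-open set `V`
eventually lies in `V`. Otherwise the generators outside `V` form an inverse system of nonempty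
finite sets; a thread of this system is an ascending chain, whose supremum is in every `Q n` but
not in `V`. -/
theorem exists_subset_of_iInter_subset {α : Type u} [Preorder α] (hα : IsDcpo α)
    {Q : ℕ → Set α} (hQ : ∀ n, IsFinitaryCompact (Q n)) (hanti : Antitone Q) {V : Set α}
    (hV : ScottOpen V) (h : ⋂ n, Q n ⊆ V) : ∃ n, Q n ⊆ V := by
  by_contra! hcon
  choose E hE _ hQE using hQ
  let S : ℕ → Type u := fun n => {e : α // e ∈ E n ∧ e ∉ V}
  have hfin : ∀ n, Finite (S n) := fun n => ((hE n).subset (Set.sep_subset _ _)).to_subtype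
  have hne : ∀ n, Nonempty (S n) := fun n => by
    obtain ⟨y, hy, hyV⟩ := Set.not_subset.1 (hcon n)
    rw [hQE] at hy
    obtain ⟨e, he, hey⟩ := hy
    exact ⟨⟨e, he, fun heV => hyV (hV.1 hey heV)⟩⟩
  have hstep : ∀ n (y : S (n + 1)), ∃ e : S n, e.1 ≤ y.1 := by
    intro n y
    have hy : y.1 ∈ Q n := hanti n.le_succ (by rw [hQE]; exact ⟨y.1, y.2.1, le_rfl⟩)
    rw [hQE] at hy
    obtain ⟨e, he, hey⟩ := hy
    exact ⟨⟨e, he, fun heV => y.2.2 (hV.1 hey heV)⟩, hey⟩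
  choose p hp using hstep
  let F : CategoryTheory.Functor ℕᵒᵖ (Type u) :=
    CategoryTheory.Functor.ofOpSequence (X := S) fun n => TypeCat.ofHom (p n)
  have : ∀ j, Finite (F.obj j) := fun j => hfin j.unop
  have : ∀ j, Nonempty (F.obj j) := fun j => hne j.unop
  obtain ⟨s, hs⟩ := nonempty_sections_of_finite_inverse_system F
  let c : ∀ n, S n := fun n => s (Opposite.op n)
  have hc : ∀ n, p n (c (n + 1)) = c n := fun n => by
    have := hs (CategoryTheory.homOfLE (Nat.le_add_right n 1)).op
    rw [CategoryTheory.Functor.ofOpSequence_map_homOfLE_succ] at this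
    exact this
  have hmono : Monotone fun n => (c n).1 := monotone_nat_of_le_succ fun n => by
    have := hp n (c (n + 1))
    rwa [hc n] at this
  obtain ⟨a, ha⟩ := hα _ (Set.range_nonempty _) (directedOn_range.2 hmono.directed_le)
  have haV : a ∈ V := h (Set.mem_iInter.2 fun n => by
    rw [hQE]
    exact ⟨_, (c n).2.1, ha.1 ⟨n, rfl⟩⟩)
  obtain ⟨_, ⟨n, rfl⟩, hn⟩ := hV.2 _ (Set.range_nonempty _)
    (directedOn_range.2 hmono.directed_le) a ha haV
  exact (c n).2.2 hn

/-- A countable generating family may be replaced by an increasing sequence. -/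
theorem IsGeneratingFamily.exists_seq {α : Type u} [Preorder α] {I : Type v} [Countable I]
    {φ : I → α → FinCompacts α} (h : IsGeneratingFamily φ) :
    ∃ ψ : ℕ → α → FinCompacts α, Monotone ψ ∧ (∀ n, IsQuasiDeflation (ψ n)) ∧
      ∀ x, (⋂ n, (ψ n x).1) = Set.Ici x := by
  obtain ⟨hI, hdir, hq, hx⟩ := h
  have : Encodable I := Encodable.ofCountable I
  have : Inhabited I := Classical.inhabited_of_nonempty hI
  have hd : Directed (· ≤ ·) φ := fun i j => hdir i j
  refine ⟨φ ∘ hd.sequence φ, hd.sequence_mono, fun n => hq _, fun x => ?_⟩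
  rw [← hx x]
  refine Set.Subset.antisymm (Set.subset_iInter fun i => ?_)
    (Set.subset_iInter fun n => Set.iInter_subset _ _)
  exact (Set.iInter_subset _ (Encodable.encode i + 1)).trans (hd.le_sequence i x)

/-- Finitely many points generate all the values of a quasi-deflation. -/
theorem IsQuasiDeflation.exists_finset {α : Type u} [Preorder α] {φ : α → FinCompacts α}
    (h : IsQuasiDeflation φ) (b : α) :
    ∃ E : Finset α, b ∈ E ∧ ∀ x, ∀ y ∈ (φ x).1, ∃ e ∈ E, e ∈ (φ x).1 ∧ e ≤ y := by
  classical
  choose gen hfin _ hgen using fun Q : FinCompacts α => Q.2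
  have hE : (⋃ Q ∈ Set.range φ, gen Q).Finite := h.2.2.biUnion fun Q _ => hfin Q
  refine ⟨insert b hE.toFinset, Finset.mem_insert_self _ _, fun x y hy => ?_⟩
  have hy' := hy
  rw [hgen] at hy'
  obtain ⟨e, he, hey⟩ := hy'
  refine ⟨e, Finset.mem_insert_of_mem (hE.mem_toFinset.2 ?_), ?_, hey⟩
  · exact Set.mem_biUnion ⟨x, rfl⟩ he
  · rw [hgen]
    exact ⟨e, he, le_rfl⟩

/-- The main result, for any topology known to be the Scott topology. In the proof, `O n V` is the
set of points whose whole value under the `n`-th quasi-deflation lies in `V`, and `G n A` the set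
of points whose value contains no points of the finite set `E n` other than those of `A`. -/
theorem isOmegaQRBDomain_probVal {Y : Type u} [PartialOrder Y] [TopologicalSpace Y]
    (hT : ∀ U : Set Y, IsOpen U ↔ ScottOpen U) (hY : IsOmegaQRBDomain Y) :
    IsOmegaQRBDomain (ProbVal Y) := by
  classical
  obtain ⟨hdcpo, ⟨bot, hb⟩, I, hI, φ, hφ⟩ := hY
  obtain ⟨ψ, hψm, hψ, hψx⟩ := hφ.exists_seq
  choose E hbE hE using fun n => (hψ n).exists_finset bot
  have hup : ∀ V : Opens Y, IsUpperSet (V : Set Y) := fun V => ((hT _).1 V.2).1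
  have hbot : ∀ U : Opens Y, bot ∈ U → U = ⊤ := fun U hU =>
    top_le_iff.1 fun x _ => hup U (hb x) hU
  let O : ℕ → Opens Y → Opens Y := fun n V =>
    ⟨{x | (ψ n x).1 ⊆ V}, (hT _).2 ((hψ n).scottOpen_preimage
      (T := {Q | Q.1 ⊆ V}) fun _ _ h h' => Set.Subset.trans h h')⟩
  let G : ℕ → Finset Y → Opens Y := fun n A =>
    ⟨{x | ∀ e ∈ E n, e ∈ (ψ n x).1 → e ∈ A}, (hT _).2 ((hψ n).scottOpen_preimage
      (T := {Q | ∀ e ∈ E n, e ∈ Q.1 → e ∈ A}) fun _ _ h h' e he he' => h' e he (h he'))⟩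
  have hcore : ∀ n ν, ∃ ξ ∈ approxSet O (fun n => gridVals (E n) n) n ν, ξ ≤ ν := by
    intro n ν
    obtain ⟨ξ, hξ, hξν, h⟩ := exists_mem_gridVals (hbE n) hbot (G n)
      (fun A B hAB x hx e he he' => hAB (hx e he he'))
      (fun A B x hx e he he' => Finset.mem_inter.2 ⟨hx.1 e he he', hx.2 e he he'⟩)
      (fun A _ V hV x hx => by
        obtain ⟨e, he, he', hex⟩ := hE n x x ((hψ n).2.1 x)
        exact hup V hex (hV e (hx e he he')))
      ν n
    refine ⟨ξ, ⟨hξ, fun V => ?_⟩, hξν⟩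
    refine le_trans (ν.2.mono _ _ ?_) (h ((E n).filter (· ∈ (V : Set Y)))
      (Finset.filter_subset _ _) V fun e he => (Finset.mem_filter.1 he).2)
    exact fun x hx e he he' => Finset.mem_filter.2 ⟨he, hx he'⟩
  refine ⟨isDcpo_probVal, ?_, ULift ℕ, inferInstance,
    exists_generatingFamily (O := O) (D := fun n => gridVals (E n) n) ?_ ?_ ?_
      (fun n => finite_gridVals _ _) hcore⟩
  · refine ⟨⟨simpleVal {bot} fun _ => 1, isProbValuation_simpleVal (by simp)⟩, fun ν U => ?_⟩
    by_cases hU : bot ∈ U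
    · obtain rfl := hbot U hU
      exact ((isProbValuation_simpleVal (by simp)).total.trans ν.2.total.symm).le
    · have : simpleVal {bot} (fun _ => 1) U = 0 := by simp [simpleVal, Finset.filter_singleton, hU]
      exact this.le.trans zero_le
  · exact fun n V W hVW x hx => Set.Subset.trans hx hVW
  · exact fun m n hmn V x hx => Set.Subset.trans (hψm hmn x) hx
  · intro V x hx
    refine exists_subset_of_iInter_subset hdcpo (fun n => (ψ n x).2)
      (fun m n hmn => hψm hmn x) ((hT _).1 V.2) ?_
    rw [hψx x]
    exact fun y hy => hup V hy hx

end Shrinking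

/-- The probabilistic powerdomain of an ωQRB-domain is an ωQRB-domain. -/
theorem probabilistic_powerdomain_of_omegaQRB {Y : Type u} [PartialOrder Y]
    (hY : IsOmegaQRBDomain Y) :
    letI : TopologicalSpace Y := scottTop Y
    IsOmegaQRBDomain (ProbVal Y) := by
  let _ : TopologicalSpace Y := scottTop Y
  exact isOmegaQRBDomain_probVal (fun _ => Iff.rfl) hY
end

section
/- Let X and Y be stably compact spaces, and r a proper surjective map from X to Y. Then V_{1 wk}(r) is surjective: for every continuous probability valuation ν on Y there exists a continuous probability valuation ν₀ on X such that ν(V) = ν₀(r⁻¹(V)) for every open subset V of Y. -/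
/-!
The valuation is first lifted to `X` as a mere finitely additive function, and Scott continuity is
then restored by regularising from below along the way-below relation `≪` (`CompactlyBelow`).

*Extension.* A monotone modular `ν` on the opens of `Y` agrees, on any prescribed finite set of
opens, with a finite sum of point masses (`exists_pointMasses`): cut `Y` along a chain of opens so
fine that each prescribed open contains or avoids each step `C \ B` of the chain, and put the mass
`ν C - ν B` at a point of that step. Modularity makes the total mass in a prescribed open telescope
to its value under `ν`. Transporting the point masses to `X` along a section of `r` and taking a
limit along an ultrafilter on finite sets of opens gives a monotone modular `μ` on all subsets of
`X` with `μ (r ⁻¹' V) = ν V` for every open `V` (`exists_modular_extension`).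

*Regularisation.* Such a `μ` need not be Scott-continuous, so it is replaced by
`U ↦ ⨆ U' ≪ U, μ U'`. In a locally compact coherent space `≪` is compatible with finite unions
and intersections, whence the result is a continuous valuation. Properness of `r` says that
preimages of compact saturated sets are compact, so `r ⁻¹'` preserves `≪`; together with Scott
continuity of `ν` this shows that the regularisation still takes the value `ν V` at `r ⁻¹' V`.
-/

open Set TopologicalSpace

universe u v

/-! ### Finitely additive extension -/

/-- A monotone, modular, strict set function: what remains of a finitely additive measure when one
only evaluates it on the sets of a lattice. -/
structure IsModularSetFun {Z : Type*} (m : Set Z → NNReal) : Prop where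
  empty : m ∅ = 0
  mono : ∀ S T : Set Z, S ⊆ T → m S ≤ m T
  modular : ∀ S T : Set Z, m (S ∪ T) + m (S ∩ T) = m S + m T

/-- Point masses in `C \ B` realising, on each `A ∈ F`, the increment of `ν` from `B` to
`(A ⊓ C) ⊔ B`. The last two clauses express that `m` is carried by `C \ B` and has total mass
`ν C - ν B`. -/
theorem exists_pointMasses {Y : Type*} [TopologicalSpace Y] {ν : Opens Y → NNReal}
    (hν : IsProbValuation ν) (F : Finset (Opens Y)) :
    ∀ B C : Opens Y, B ≤ C → ∃ m : Set Y → NNReal, IsModularSetFun m ∧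
      (∀ A ∈ F, m A + ν B = ν (A ⊓ C ⊔ B)) ∧
      (∀ S : Set Y, (C : Set Y) \ B ⊆ S → m S + ν B = ν C) ∧
      (∀ S : Set Y, Disjoint S ((C : Set Y) \ B) → m S = 0) := by
  classical
  induction F using Finset.induction_on with
  | empty =>
    intro B C hBC
    by_cases h : C ≤ B
    · obtain rfl := le_antisymm hBC h
      exact ⟨fun _ => 0, ⟨rfl, by simp, by simp⟩, by simp, by simp, by simp⟩
    · obtain ⟨x, hxC, hxB⟩ := Set.not_subset.1 (show ¬ (C : Set Y) ⊆ B from h)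
      refine ⟨fun S => if x ∈ S then ν C - ν B else 0, ⟨by simp, ?_, ?_⟩, by simp, ?_, ?_⟩
      · intro S T hST
        by_cases hS : x ∈ S
        · simp [hS, hST hS]
        · simp [hS]
      · intro S T
        by_cases hS : x ∈ S <;> by_cases hT : x ∈ T <;> simp [hS, hT]
      · intro S hS
        simp only [hS ⟨hxC, hxB⟩, if_true]
        exact tsub_add_cancel_of_le (hν.mono _ _ hBC)
      · intro S hS
        have : x ∉ S := fun hx => Set.disjoint_left.1 hS hx ⟨hxC, hxB⟩
        simp [this]
  | insert A₀ F _ ih =>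
    intro B C hBC
    -- cut the step from `B` to `C` at `E`, so that `A₀` contains `E \ B` and avoids `C \ E`
    set E : Opens Y := A₀ ⊓ C ⊔ B with hE
    have hBE : B ≤ E := le_sup_right
    have hEC : E ≤ C := sup_le inf_le_right hBC
    obtain ⟨m₁, h₁, hF₁, ht₁, hz₁⟩ := ih B E hBE
    obtain ⟨m₂, h₂, hF₂, ht₂, hz₂⟩ := ih E C hEC
    refine ⟨fun S => m₁ S + m₂ S, ⟨?_, ?_, ?_⟩, ?_, ?_, ?_⟩
    · simp [h₁.empty, h₂.empty]
    · intro S T hST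
      exact add_le_add (h₁.mono _ _ hST) (h₂.mono _ _ hST)
    · intro S T
      calc m₁ (S ∪ T) + m₂ (S ∪ T) + (m₁ (S ∩ T) + m₂ (S ∩ T))
          = (m₁ (S ∪ T) + m₁ (S ∩ T)) + (m₂ (S ∪ T) + m₂ (S ∩ T)) := by ring
        _ = _ := by rw [h₁.modular, h₂.modular]; ring
    · intro A hA
      rcases Finset.mem_insert.1 hA with rfl | hA
      · have e₁ := ht₁ (A : Set Y) (by
          rintro y ⟨hy, hyB⟩
          rcases hy with hy | hy
          · exact hy.1
          · exact absurd hy hyB)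
        have e₂ := hz₂ (A : Set Y) (by
          refine Set.disjoint_left.2 fun y hy hy' => hy'.2 ?_
          exact Or.inl ⟨hy, hy'.1⟩)
        show m₁ A + m₂ A + ν B = ν E
        rw [e₂, add_zero, e₁]
      · have e₁ := hF₁ A hA
        have e₂ := hF₂ A hA
        have hm := hν.modular (A ⊓ C ⊔ B) E
        have s₁ : (A ⊓ C ⊔ B) ⊔ E = A ⊓ C ⊔ E := by
          rw [sup_assoc, sup_eq_right.2 hBE]
        have s₂ : (A ⊓ C ⊔ B) ⊓ E = A ⊓ E ⊔ B := by
          rw [inf_sup_right, inf_assoc, inf_eq_right.2 hEC, inf_eq_left.2 hBE]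
        rw [s₁, s₂, ← e₁, ← e₂] at hm
        apply add_right_cancel (b := ν E)
        rw [← hm]
        show m₁ A + m₂ A + ν B + ν E = _
        ring
    · intro S hS
      have e₁ := ht₁ S (fun y hy => hS ⟨hEC hy.1, hy.2⟩)
      have e₂ := ht₂ S (fun y hy => hS ⟨hy.1, fun h => hy.2 (hBE h)⟩)
      show m₁ S + m₂ S + ν B = ν C
      rw [← e₂, ← e₁]
      ring
    · intro S hS
      have e₁ := hz₁ S (hS.mono_right
        (show (E : Set Y) \ B ⊆ (C : Set Y) \ B from fun y hy => ⟨hEC hy.1, hy.2⟩))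
      have e₂ := hz₂ S (hS.mono_right
        (show (C : Set Y) \ E ⊆ (C : Set Y) \ B from fun y hy => ⟨hy.1, fun h => hy.2 (hBE h)⟩))
      show m₁ S + m₂ S = 0
      rw [e₁, e₂, add_zero]

/-- A valuation on `Y` lifts along a surjection to a modular function on all subsets of `X`. Only
finite additivity survives the limit, so no topology on `X` is involved. -/
theorem exists_modular_extension {X Y : Type*} [TopologicalSpace Y] {ν : Opens Y → NNReal}
    (hν : IsProbValuation ν) (r : X → Y) (hr : Function.Surjective r) :
    ∃ μ : Set X → NNReal, IsModularSetFun μ ∧ ∀ V : Opens Y, μ (r ⁻¹' V) = ν V := by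
  classical
  choose m hm hF ht _ using fun F : Finset (Opens Y) =>
    exists_pointMasses hν F ⊥ ⊤ bot_le
  obtain ⟨s, hs⟩ := hr.hasRightInverse
  let G : Ultrafilter (Finset (Opens Y)) := Ultrafilter.of Filter.atTop
  have hG : (G : Filter (Finset (Opens Y))) ≤ Filter.atTop := Ultrafilter.of_le _
  have hle : ∀ F S, m F S ≤ 1 := by
    intro F S
    have h := ht F Set.univ (Set.subset_univ _)
    rw [hν.empty, hν.total, add_zero] at h
    exact h ▸ (hm F).mono _ _ (Set.subset_univ _)
  have hlim : ∀ W : Set X, ∃ a : NNReal,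
      Filter.Tendsto (fun F => m F (s ⁻¹' W)) G (nhds a) := by
    intro W
    obtain ⟨a, -, ha⟩ := (isCompact_Icc (a := (0 : NNReal)) (b := 1)).ultrafilter_le_nhds
      (G.map fun F => m F (s ⁻¹' W))
      (Filter.le_principal_iff.2 (Filter.mem_map.2
        (Filter.univ_mem' fun F => ⟨zero_le, hle F _⟩)))
    exact ⟨a, ha⟩
  choose μ hμ using hlim
  refine ⟨μ, ⟨?_, ?_, ?_⟩, ?_⟩
  · refine tendsto_nhds_unique (hμ ∅) ?_
    simp [(hm _).empty]
  · intro S T hST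
    exact le_of_tendsto_of_tendsto' (hμ S) (hμ T)
      fun F => (hm F).mono _ _ (Set.preimage_mono hST)
  · intro S T
    refine tendsto_nhds_unique ((hμ (S ∪ T)).add (hμ (S ∩ T))) ?_
    refine ((hμ S).add (hμ T)).congr fun F => ?_
    rw [Set.preimage_union, Set.preimage_inter, (hm F).modular]
  · intro V
    refine tendsto_nhds_unique (hμ _) (tendsto_const_nhds.congr' ?_)
    filter_upwards [hG (Filter.eventually_ge_atTop {V})] with F hVF
    have hV : V ∈ F := hVF (Finset.mem_singleton_self V)
    have h := hF F V hV
    rw [hν.empty, add_zero, inf_top_eq, sup_bot_eq] at h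
    rw [← h, ← Set.preimage_comp, hs.comp_eq_id, Set.preimage_id]

/-! ### The way-below relation on opens -/

/-- The way-below relation on opens of a locally compact space, in the interpolated form
`U ⊆ K ⊆ V` for some compact `K`. -/
def CompactlyBelow {X : Type*} [TopologicalSpace X] (U V : Opens X) : Prop :=
  ∃ K : Set X, IsCompact K ∧ (U : Set X) ⊆ K ∧ K ⊆ (V : Set X)

section CompactlyBelow

variable {X : Type*} [TopologicalSpace X]

theorem subset_specUpSet (K : Set X) : K ⊆ specUpSet K :=
  fun x hx => ⟨x, hx, fun _ _ h => h⟩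

theorem specUpSet_subset_of_isOpen {K U : Set X} (hU : IsOpen U) (h : K ⊆ U) :
    specUpSet K ⊆ U := by
  rintro x ⟨a, ha, hax⟩
  exact hax U hU (h ha)

theorem isSaturatedSet_specUpSet (K : Set X) : IsSaturatedSet (specUpSet K) := by
  rintro x ⟨a, ha, hax⟩ y hxy
  exact ⟨a, ha, fun U hU h => hxy U hU (hax U hU h)⟩

theorem isCompact_specUpSet {K : Set X} (hK : IsCompact K) : IsCompact (specUpSet K) := by
  refine isCompact_of_finite_subcover fun U hU hcov => ?_
  obtain ⟨t, ht⟩ := hK.elim_finite_subcover U hU ((subset_specUpSet K).trans hcov)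
  exact ⟨t, specUpSet_subset_of_isOpen (isOpen_biUnion fun i _ => hU i) ht⟩

theorem CompactlyBelow.le {U V : Opens X} (h : CompactlyBelow U V) : U ≤ V := by
  obtain ⟨K, -, h₁, h₂⟩ := h
  exact h₁.trans h₂

theorem CompactlyBelow.mono_right {U V W : Opens X} (h : CompactlyBelow U V) (hVW : V ≤ W) :
    CompactlyBelow U W := by
  obtain ⟨K, hK, h₁, h₂⟩ := h
  exact ⟨K, hK, h₁, h₂.trans hVW⟩

theorem compactlyBelow_bot (U : Opens X) : CompactlyBelow ⊥ U :=
  ⟨∅, isCompact_empty, by simp, by simp⟩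

theorem CompactlyBelow.sup {U U' V V' : Opens X} (hU : CompactlyBelow U' U)
    (hV : CompactlyBelow V' V) : CompactlyBelow (U' ⊔ V') (U ⊔ V) := by
  obtain ⟨K, hK, h₁, h₂⟩ := hU
  obtain ⟨L, hL, h₃, h₄⟩ := hV
  exact ⟨K ∪ L, hK.union hL, Set.union_subset_union h₁ h₃, Set.union_subset_union h₂ h₄⟩

theorem CompactlyBelow.inf (hX : IsCoherent X) {U U' V V' : Opens X} (hU : CompactlyBelow U' U)
    (hV : CompactlyBelow V' V) : CompactlyBelow (U' ⊓ V') (U ⊓ V) := by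
  obtain ⟨K, hK, h₁, h₂⟩ := hU
  obtain ⟨L, hL, h₃, h₄⟩ := hV
  exact ⟨specUpSet K ∩ specUpSet L,
    hX _ _ (isCompact_specUpSet hK) (isSaturatedSet_specUpSet K)
      (isCompact_specUpSet hL) (isSaturatedSet_specUpSet L),
    Set.inter_subset_inter (h₁.trans (subset_specUpSet K)) (h₃.trans (subset_specUpSet L)),
    Set.inter_subset_inter (specUpSet_subset_of_isOpen U.2 h₂)
      (specUpSet_subset_of_isOpen V.2 h₄)⟩

theorem exists_compactlyBelow_mem [LocallyCompactSpace X] {U : Opens X} {x : X} (hx : x ∈ U) :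
    ∃ U' : Opens X, CompactlyBelow U' U ∧ x ∈ U' := by
  obtain ⟨K, hK, hKU, hKc⟩ := local_compact_nhds (U.2.mem_nhds hx)
  exact ⟨⟨interior K, isOpen_interior⟩, ⟨K, hKc, interior_subset, hKU⟩,
    mem_interior_iff_mem_nhds.2 hK⟩

/-- Compactness of `K` against a directed family of opens. -/
theorem exists_subset_of_directedOn {K : Set X} (hK : IsCompact K) {S : Set (Opens X)}
    (hne : S.Nonempty) (hS : DirectedOn (· ≤ ·) S) (hcov : K ⊆ (sSup S : Opens X)) :
    ∃ U ∈ S, K ⊆ (U : Set X) := by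
  have := hne.to_subtype
  obtain ⟨⟨U, hU⟩, h⟩ := hK.elim_directed_cover (fun U : S => ((U : Opens X) : Set X))
    (fun U => U.1.2) (by
      intro x hx
      obtain ⟨U, hU, hxU⟩ := Opens.mem_sSup.1 (hcov hx)
      exact Set.mem_iUnion.2 ⟨⟨U, hU⟩, hxU⟩)
    (fun U V => by
      obtain ⟨W, hW, h₁, h₂⟩ := hS U U.2 V V.2
      exact ⟨⟨W, hW⟩, h₁, h₂⟩)
  exact ⟨U, hU, h⟩

theorem CompactlyBelow.exists_le_sup [LocallyCompactSpace X] {P U V : Opens X}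
    (h : CompactlyBelow P (U ⊔ V)) :
    ∃ U' V' : Opens X, CompactlyBelow U' U ∧ CompactlyBelow V' V ∧ P ≤ U' ⊔ V' := by
  obtain ⟨K, hK, hPK, hKUV⟩ := h
  obtain ⟨_, ⟨U', V', hU', hV', rfl⟩, hW⟩ := exists_subset_of_directedOn hK
    (S := {W | ∃ U' V' : Opens X, CompactlyBelow U' U ∧ CompactlyBelow V' V ∧ U' ⊔ V' = W})
    ⟨_, ⊥, ⊥, compactlyBelow_bot U, compactlyBelow_bot V, rfl⟩
    (by
      rintro _ ⟨A, B, hA, hB, rfl⟩ _ ⟨A', B', hA', hB', rfl⟩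
      refine ⟨_, ⟨A ⊔ A', B ⊔ B', (hA.sup hA').mono_right (sup_idem U).le,
        (hB.sup hB').mono_right (sup_idem V).le, rfl⟩, ?_, ?_⟩
      · exact sup_le_sup le_sup_left le_sup_left
      · exact sup_le_sup le_sup_right le_sup_right)
    (by
      intro x hx
      refine Opens.mem_sSup.2 ?_
      rcases hKUV hx with hx | hx
      · obtain ⟨U', hU', hxU'⟩ := exists_compactlyBelow_mem (U := U) hx
        exact ⟨_, ⟨U', ⊥, hU', compactlyBelow_bot V, rfl⟩, Or.inl hxU'⟩
      · obtain ⟨V', hV', hxV'⟩ := exists_compactlyBelow_mem (U := V) hx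
        exact ⟨_, ⟨⊥, V', compactlyBelow_bot U, hV', rfl⟩, Or.inr hxV'⟩)
  exact ⟨U', V', hU', hV', hPK.trans hW⟩

theorem directedOn_compactlyBelow (U : Opens X) :
    DirectedOn (· ≤ ·) {U' : Opens X | CompactlyBelow U' U} :=
  fun A hA B hB => ⟨A ⊔ B, (hA.sup hB).mono_right (sup_idem U).le, le_sup_left, le_sup_right⟩

theorem sSup_compactlyBelow [LocallyCompactSpace X] (U : Opens X) :
    sSup {U' : Opens X | CompactlyBelow U' U} = U := by
  refine le_antisymm (sSup_le fun U' h => CompactlyBelow.le h) fun x hx => ?_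
  obtain ⟨U', hU', hxU'⟩ := exists_compactlyBelow_mem hx
  exact Opens.mem_sSup.2 ⟨U', hU', hxU'⟩

end CompactlyBelow

/-! ### Proper maps -/

/-- Preimages of compact saturated sets under a proper map are compact: if an open `U` contains
the fibre `r ⁻¹' ↑y`, then `(↓ r (Uᶜ))ᶜ` is an open neighbourhood of `y` whose preimage lies in
`U`, which reduces a directed cover of `r ⁻¹' Q` to a directed cover of `Q`. -/
theorem PaperProper.isCompact_preimage {X : Type u} {Y : Type v} [TopologicalSpace X]
    [TopologicalSpace Y] {r : X → Y} (hr : PaperProper r) {Q : Set Y} (hQ : IsCompact Q)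
    (hQs : IsSaturatedSet Q) : IsCompact (r ⁻¹' Q) := by
  classical
  refine isCompact_of_finite_subcover fun {ι} U hU hcov => ?_
  let O : Finset ι → Set Y := fun t => (specDownSet (r '' (⋃ i ∈ t, U i)ᶜ))ᶜ
  have hOo : ∀ t, IsOpen (O t) := fun t =>
    (hr.2.1 _ (isOpen_biUnion fun i _ => hU i).isClosed_compl).isOpen_compl
  have hOm : ∀ {t t'}, t ⊆ t' → O t ⊆ O t' := by
    rintro t t' htt' y hy ⟨_, ⟨x, hx, rfl⟩, hyx⟩
    exact hy ⟨_, ⟨x, fun h => hx (Set.biUnion_subset_biUnion_left htt' h), rfl⟩, hyx⟩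
  obtain ⟨t, ht⟩ := hQ.elim_directed_cover O hOo
    (by
      intro y hy
      obtain ⟨t, ht⟩ := (hr.2.2 y).elim_finite_subcover U hU
        ((Set.preimage_mono fun z hz => hQs y hy z hz).trans hcov)
      refine Set.mem_iUnion.2 ⟨t, ?_⟩
      rintro ⟨_, ⟨x, hx, rfl⟩, hyx⟩
      exact hx (ht hyx))
    (fun t t' => ⟨t ∪ t', hOm Finset.subset_union_left, hOm Finset.subset_union_right⟩)
  refine ⟨t, fun x hx => ?_⟩
  by_contra h
  exact ht hx ⟨_, ⟨x, h, rfl⟩, fun _ _ h => h⟩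

/-! ### Inner regularisation -/

/-- The inner regularisation of a set function, a supremum over the opens `U' ≪ U`. -/
noncomputable def innerReg {X : Type*} [TopologicalSpace X] (μ : Set X → NNReal)
    (U : Opens X) : NNReal :=
  ⨆ U' : {U' : Opens X // CompactlyBelow U' U}, μ U'.1

section InnerReg

variable {X : Type*} [TopologicalSpace X] {μ : Set X → NNReal}

theorem le_innerReg (hμ : IsModularSetFun μ) {U U' : Opens X} (h : CompactlyBelow U' U) :
    μ U' ≤ innerReg μ U :=
  le_ciSup (f := fun U' : {U' : Opens X // CompactlyBelow U' U} => μ U'.1)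
    ⟨μ Set.univ, by rintro _ ⟨V, rfl⟩; exact hμ.mono _ _ (Set.subset_univ _)⟩ ⟨U', h⟩

theorem innerReg_le {U : Opens X} {a : NNReal}
    (h : ∀ U', CompactlyBelow U' U → μ U' ≤ a) : innerReg μ U ≤ a :=
  have : Nonempty {U' : Opens X // CompactlyBelow U' U} := ⟨⟨⊥, compactlyBelow_bot U⟩⟩
  ciSup_le fun U' => h U'.1 U'.2

theorem innerReg_add_le {U V : Opens X} {a : NNReal}
    (h : ∀ U' V', CompactlyBelow U' U → CompactlyBelow V' V → μ U' + μ V' ≤ a) :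
    innerReg μ U + innerReg μ V ≤ a := by
  have key : ∀ V', CompactlyBelow V' V → innerReg μ U + μ V' ≤ a := fun V' hV' =>
    add_le_of_le_tsub_right_of_le (le_add_self.trans (h ⊥ V' (compactlyBelow_bot U) hV'))
      (innerReg_le fun U' hU' => le_tsub_of_add_le_right (h U' V' hU' hV'))
  exact add_le_of_le_tsub_left_of_le (le_self_add.trans (key ⊥ (compactlyBelow_bot V)))
    (innerReg_le fun W hW => le_tsub_of_add_le_left (key W hW))

/-- In an `NNReal`-valued bounded supremum `⨆ U ∈ S, f U` the indices outside `S` contribute the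
junk value `0`, which is harmless. -/
theorem le_biSup_nnreal {α : Type*} {f : α → NNReal} {c : NNReal} (hf : ∀ a, f a ≤ c)
    {S : Set α} {a : α} (ha : a ∈ S) : f a ≤ ⨆ a ∈ S, f a := by
  refine le_ciSup_of_le (f := fun a => ⨆ _ : a ∈ S, f a) ⟨c, ?_⟩ a ?_
  · rintro _ ⟨b, rfl⟩
    exact ciSup_le' fun _ => hf b
  · have : Nonempty (a ∈ S) := ⟨ha⟩
    exact (ciSup_const (a := f a)).ge

theorem isProbValuation_innerReg [CompactSpace X] [LocallyCompactSpace X] (hX : IsCoherent X)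
    (hμ : IsModularSetFun μ) (h1 : μ Set.univ = 1) : IsProbValuation (innerReg μ) := by
  have hmono : ∀ U V : Opens X, U ≤ V → innerReg μ U ≤ innerReg μ V := fun U V hUV =>
    innerReg_le fun U' h => le_innerReg hμ (h.mono_right hUV)
  have hone : ∀ U : Opens X, innerReg μ U ≤ 1 := fun U =>
    innerReg_le fun U' _ => h1 ▸ hμ.mono _ _ (Set.subset_univ _)
  refine ⟨?_, hmono, ?_, ?_, ?_⟩
  · refine le_antisymm (innerReg_le fun U' h => ?_) (zero_le)
    rw [le_bot_iff.1 h.le, Opens.coe_bot, hμ.empty]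
  · intro U V
    apply le_antisymm
    · refine innerReg_add_le fun P Q hP hQ => ?_
      obtain ⟨U', V', hU', hV', hPUV⟩ := hP.exists_le_sup
      -- enlarging by `Q` makes `Q` lie below the intersection as well
      have hUQ := (hU'.sup (hQ.mono_right inf_le_left)).mono_right (sup_idem U).le
      have hVQ := (hV'.sup (hQ.mono_right inf_le_right)).mono_right (sup_idem V).le
      calc μ P + μ Q
          ≤ μ ((U' ⊔ Q : Opens X) ∪ (V' ⊔ Q : Opens X)) +
            μ ((U' ⊔ Q : Opens X) ∩ (V' ⊔ Q : Opens X)) := by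
            refine add_le_add (hμ.mono _ _ ?_) (hμ.mono _ _ ?_)
            · exact (show P ≤ (U' ⊔ Q) ⊔ (V' ⊔ Q) from
                hPUV.trans (sup_le_sup le_sup_left le_sup_left))
            · exact (show Q ≤ (U' ⊔ Q) ⊓ (V' ⊔ Q) from le_inf le_sup_right le_sup_right)
        _ = μ (U' ⊔ Q : Opens X) + μ (V' ⊔ Q : Opens X) := hμ.modular _ _
        _ ≤ _ := add_le_add (le_innerReg hμ hUQ) (le_innerReg hμ hVQ)
    · refine innerReg_add_le fun P Q hP hQ => ?_
      rw [← hμ.modular]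
      exact add_le_add (le_innerReg hμ (hP.sup hQ)) (le_innerReg hμ (hP.inf hX hQ))
  · intro S hne hS
    apply le_antisymm
    · refine innerReg_le fun P hP => ?_
      obtain ⟨K, hK, hPK, hKS⟩ := hP
      obtain ⟨U, hU, hKU⟩ := exists_subset_of_directedOn hK hne hS hKS
      exact (le_innerReg hμ ⟨K, hK, hPK, hKU⟩).trans (le_biSup_nnreal hone hU)
    · exact ciSup_le' fun U => ciSup_le' fun hU => hmono _ _ (le_sSup hU)
  · refine le_antisymm (hone _) ?_
    rw [← h1]
    exact le_innerReg hμ (U' := ⊤) ⟨Set.univ, isCompact_univ, by simp, by simp⟩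

end InnerReg

/-! ### Surjectivity of the pushforward -/

/-- If `r` is a proper surjective map between stably compact spaces, then every
continuous probability valuation on `Y` is the pushforward of one on `X`. -/
theorem valuation_pushforward_surjective {X : Type u} {Y : Type v}
    [TopologicalSpace X] [TopologicalSpace Y]
    (hX : IsStablyCompact X) (hY : IsStablyCompact Y)
    (r : X → Y) (hr : PaperProper r) (hsurj : Function.Surjective r)
    (ν : Opens Y → NNReal) (hν : IsProbValuation ν) :
    ∃ ν₀ : Opens X → NNReal, IsProbValuation ν₀ ∧
      ∀ V : Opens Y, ν V = ν₀ ⟨r ⁻¹' V.1, V.2.preimage hr.1⟩ := by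
  obtain ⟨-, hXc, hXl, -, hXcoh⟩ := hX
  obtain ⟨-, -, hYl, -, -⟩ := hY
  obtain ⟨μ, hμ, hμr⟩ := exists_modular_extension hν r hsurj
  have h1 : μ Set.univ = 1 := by
    have h := hμr ⊤
    rwa [Opens.coe_top, Set.preimage_univ, hν.total] at h
  refine ⟨innerReg μ, isProbValuation_innerReg hXcoh hμ h1, fun V => le_antisymm ?_ ?_⟩
  · have h := hν.scont {V' | CompactlyBelow V' V} ⟨⊥, compactlyBelow_bot V⟩
      (directedOn_compactlyBelow V)
    rw [sSup_compactlyBelow] at h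
    rw [h]
    refine ciSup_le' fun V' => ciSup_le' ?_
    rintro ⟨K, hK, hVK, hKV⟩
    rw [← hμr V']
    exact le_innerReg hμ (U' := ⟨r ⁻¹' V'.1, V'.2.preimage hr.1⟩)
      ⟨r ⁻¹' specUpSet K,
        hr.isCompact_preimage (isCompact_specUpSet hK) (isSaturatedSet_specUpSet K),
        Set.preimage_mono (hVK.trans (subset_specUpSet K)),
        Set.preimage_mono (specUpSet_subset_of_isOpen V.2 hKV)⟩
  · refine innerReg_le fun U' h => ?_
    rw [← hμr V]
    exact hμ.mono _ _ h.le
end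

section
/- Let X and Y be stably compact spaces, and r a proper surjective map from X to Y. Then for every continuous probability valuation ν on X and every compact saturated subset Q of Y, one has (V_1(r)(ν))†(Q) = ν†(r⁻¹(Q)), where V_1(r)(ν)(V) = ν(r⁻¹(V)). -/
/-!
Every open `V ⊇ Q` gives the open neighbourhood `r⁻¹ V` of `r⁻¹ Q`, which yields
`ν†(r⁻¹ Q) ≤ (V_1(r) ν)†(Q)`. Conversely, the open sets of the form `r⁻¹ V` with `Q ⊆ V` are
cofinal among the open neighbourhoods of `r⁻¹ Q`: given an open `U ⊇ r⁻¹ Q`, let `V` be the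
complement of the downward closure of `r(Uᶜ)`. Properness of `r` makes `V` open, saturation of
`Q` gives `Q ⊆ V`, and `r⁻¹ V ⊆ U` because every point lies below itself. Monotonicity of `ν`
then compares the two infima.
-/

open Set TopologicalSpace

universe u v

/-- Open neighbourhoods of the preimage of a saturated set contain preimages of open
neighbourhoods of that set. -/
theorem exists_open_preimage_subset {X : Type u} {Y : Type v}
    [TopologicalSpace X] [TopologicalSpace Y] {r : X → Y} (hr : PaperProper r)
    {Q : Set Y} (hQsat : IsSaturatedSet Q) {U : Set X} (hU : IsOpen U) (hQU : r ⁻¹' Q ⊆ U) :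
    ∃ V : Set Y, IsOpen V ∧ Q ⊆ V ∧ r ⁻¹' V ⊆ U := by
  refine ⟨(specDownSet (r '' Uᶜ))ᶜ, (hr.2.1 _ hU.isClosed_compl).isOpen_compl, ?_, ?_⟩
  · rintro q hq ⟨_, ⟨a, ha, rfl⟩, hle⟩
    exact ha (hQU (hQsat q hq _ hle))
  · intro x hx
    by_contra hxU
    exact hx ⟨r x, ⟨x, hxU, rfl⟩, fun _ _ h => h⟩

/-- For a proper surjective map `r` between stably compact spaces, a probability
valuation `ν` on `X` and a compact saturated `Q ⊆ Y`:
`(V_1(r)(ν))†(Q) = ν†(r⁻¹(Q))`. -/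
theorem dagger_of_pushforward {X : Type u} {Y : Type v}
    [TopologicalSpace X] [TopologicalSpace Y]
    (hX : IsStablyCompact X) (hY : IsStablyCompact Y)
    (r : X → Y) (hr : PaperProper r) (hsurj : Function.Surjective r)
    (ν : Opens X → NNReal) (hν : IsProbValuation ν)
    (Q : Set Y) (hQ : IsCompact Q) (hQsat : IsSaturatedSet Q) :
    dagVal (fun V : Opens Y => ν ⟨r ⁻¹' V.1, V.2.preimage hr.1⟩) Q
      = dagVal ν (r ⁻¹' Q) := by
  unfold dagVal
  have : Nonempty {U : Opens X // r ⁻¹' Q ⊆ U.1} := ⟨⟨⊤, fun _ _ => trivial⟩⟩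
  have : Nonempty {V : Opens Y // Q ⊆ V.1} := ⟨⟨⊤, fun _ _ => trivial⟩⟩
  apply le_antisymm
  · refine le_ciInf fun U => ?_
    obtain ⟨V, hV, hQV, hVU⟩ := exists_open_preimage_subset hr hQsat U.1.2 U.2
    exact (ciInf_le (OrderBot.bddBelow _) (⟨⟨V, hV⟩, hQV⟩ : {V : Opens Y // Q ⊆ V.1})).trans
      (hν.mono _ _ hVU)
  · refine le_ciInf fun V => ?_
    exact ciInf_le (OrderBot.bddBelow _)
      (⟨⟨r ⁻¹' V.1.1, V.1.2.preimage hr.1⟩, preimage_mono V.2⟩ :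
        {U : Opens X // r ⁻¹' Q ⊆ U.1})
end
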